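/- Let δ>0 with δ≠2 and let s ∈ (0,1). For every C² function h:[0,1]→ℝ with compact support contained in (0,1), ∫₀¹ h''(r) G_δ(s,r) dr = −h(s) + (1/(4(δ−2))) ∫₀¹ h(r) (∫₀^∞ b^{δ−1} (d³/db³)Σ^δ_{r,s}(b) db) dr. In distributional terms, the second r-derivative of G_δ(s,·) on (0,1) equals −δ_s(r) + (1/(4(δ−2))) ∫₀^∞ b^{δ−1}(d³/db³)Σ^δ_{r,s}(b) db, where δ_s is the Dirac measure at s. -/

import Mathlib

open MeasureTheory Real Filter

/-- Ascending Pochhammer symbol `(a)_k = a(a+1)⋯(a+k-1)`. -/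
noncomputable def poch (a : ℝ) (k : ℕ) : ℝ := ∏ i ∈ Finset.range k, (a + i)

/-- Gauss hypergeometric function `₂F₁(a,b,c,z) = ∑ (a)_k (b)_k / (k! (c)_k) z^k`. -/
noncomputable def hyp2F1 (a b c z : ℝ) : ℝ :=
  ∑' k : ℕ, (poch a k * poch b k) / ((Nat.factorial k : ℝ) * poch c k) * z ^ k

/-- `K(δ) = 2 Γ((δ+1)/2)² / Γ(δ/2)²`. -/
noncomputable def Kcoef (δ : ℝ) : ℝ :=
  2 * Real.Gamma ((δ + 1) / 2) ^ 2 / Real.Gamma (δ / 2) ^ 2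

/-- Two-point kernel `G_δ(s,r)`, equal to the second moment `E^δ[X_s X_r]` of a
δ-dimensional Bessel bridge from 0 to 0 over [0,1]. -/
noncomputable def twoPt (δ s r : ℝ) : ℝ :=
  if s < r then
    Kcoef δ * (r - s) ^ (δ / 2 + 1) * (s * (1 - r)) ^ ((1 : ℝ) / 2) *
      (r * (1 - s)) ^ (-((δ + 1) / 2)) *
      hyp2F1 ((δ + 1) / 2) ((δ + 1) / 2) (δ / 2) (s * (1 - r) / (r * (1 - s)))
  else
    Kcoef δ * (s - r) ^ (δ / 2 + 1) * (r * (1 - s)) ^ ((1 : ℝ) / 2) *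
      (s * (1 - r)) ^ (-((δ + 1) / 2)) *
      hyp2F1 ((δ + 1) / 2) ((δ + 1) / 2) (δ / 2) (r * (1 - s) / (s * (1 - r)))

/-- Coefficient `D(s,r)`. -/
noncomputable def Dcoef (s r : ℝ) : ℝ :=
  if s < r then (1 - s) / ((r - s) * (1 - r)) else s / (r * (s - r))

/-- Coefficient `C_k = Γ(k+(δ+1)/2)/(Γ(δ/2) Γ(k+δ/2) k!)`. -/
noncomputable def Ccoef (δ : ℝ) (k : ℕ) : ℝ :=
  Real.Gamma ((k : ℝ) + (δ + 1) / 2) /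
    (Real.Gamma (δ / 2) * Real.Gamma ((k : ℝ) + δ / 2) * (Nat.factorial k : ℝ))

/-- Coefficient `f_k(s,r)`. -/
noncomputable def fcoef (s r : ℝ) (k : ℕ) : ℝ :=
  if s < r then (2 * (r - s)) ^ ((1 : ℝ) / 2 - (k : ℝ)) * (s / r) ^ ((k : ℝ) + 1 / 2)
  else (2 * (s - r)) ^ ((1 : ℝ) / 2 - (k : ℝ)) * ((1 - s) / (1 - r)) ^ ((k : ℝ) + 1 / 2)

/-- `Σ^δ_{r,s}(b) = Σ^δ_r(X_s | b)`, the density-weighted conditional expectation of a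
δ-dimensional Bessel bridge. -/
noncomputable def SigmaRS (δ r s b : ℝ) : ℝ :=
  ((2 : ℝ) ^ (δ / 2 - 1) * (r * (1 - r)) ^ (δ / 2))⁻¹ *
    Real.exp (-(Dcoef s r) * b ^ 2 / 2) *
    ∑' k : ℕ, Ccoef δ k * fcoef s r k * b ^ (2 * k)

lemma poch_zero' (a : ℝ) : poch a 0 = 1 := by simp [poch]

lemma poch_succ' (a : ℝ) (k : ℕ) : poch a (k + 1) = poch a k * (a + k) := by
  simp [poch, Finset.prod_range_succ]

lemma poch_succ_left (a : ℝ) (k : ℕ) : poch a (k + 1) = a * poch (a + 1) k := by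
  induction k with
  | zero => simp [poch]
  | succ n ih =>
    rw [poch_succ', ih, poch_succ']
    push_cast; ring

lemma poch_pos' {a : ℝ} (ha : 0 < a) (k : ℕ) : 0 < poch a k := by
  unfold poch
  exact Finset.prod_pos (fun i _ => by positivity)

lemma poch_one_fact (k : ℕ) : poch 1 k = (Nat.factorial k : ℝ) := by
  induction k with
  | zero => simp [poch]
  | succ n ih =>
    rw [poch_succ', ih, Nat.factorial_succ]
    push_cast; ring

lemma abs_poch_le (a : ℝ) (k : ℕ) : |poch a k| ≤ poch (|a| + 1) k := by
  unfold poch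
  rw [Finset.abs_prod]
  refine Finset.prod_le_prod (fun i _ => abs_nonneg _) (fun i _ => ?_)
  calc |a + i| ≤ |a| + |(i : ℝ)| := abs_add_le _ _
    _ ≤ |a| + 1 + i := by rw [abs_of_nonneg (Nat.cast_nonneg i : (0 : ℝ) ≤ i)]; linarith

lemma Gamma_add_nat' {a : ℝ} (ha : 0 < a) (k : ℕ) :
    Real.Gamma ((k : ℝ) + a) = Real.Gamma a * poch a k := by
  induction k with
  | zero => simp [poch]
  | succ n ih =>
    have : ((n + 1 : ℕ) : ℝ) + a = ((n : ℝ) + a) + 1 := by push_cast; ring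
    rw [this, Real.Gamma_add_one (by positivity), ih, poch_succ']
    ring

/-- ratio test -/
lemma summable_ratio {u ρ : ℕ → ℝ} {l : ℝ} (hl : |l| < 1) (hρ : Tendsto ρ atTop (nhds l))
    (hu : ∀ k, u (k + 1) = ρ k * u k) : Summable (fun k => ‖u k‖) := by
  obtain ⟨m, hm1, hm2⟩ := exists_between hl
  have h1 : Tendsto (fun k => |ρ k|) atTop (nhds |l|) := hρ.abs
  have h2 : ∀ᶠ k in atTop, |ρ k| < m := h1.eventually (gt_mem_nhds hm1)
  have := summable_of_ratio_norm_eventually_le (f := fun k => ‖u k‖) hm2 (by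
    filter_upwards [h2] with k hk
    rw [norm_norm, norm_norm, hu, norm_mul]
    exact mul_le_mul_of_nonneg_right hk.le (norm_nonneg _))
  exact this

lemma tendsto_lin_ratio (a b : ℝ) :
    Tendsto (fun k : ℕ => (a + (k : ℝ)) / (b + k)) atTop (nhds 1) := by
  simpa using tendsto_add_mul_div_add_mul_atTop_nhds a b 1 (d := 1) one_ne_zero

lemma summable_hyp {a b c z : ℝ} (hc : 0 < c) (hz : |z| < 1) :
    Summable (fun k : ℕ =>
      ‖(poch a k * poch b k) / ((Nat.factorial k : ℝ) * poch c k) * z ^ k‖) := by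
  refine summable_ratio (ρ := fun k : ℕ => (a + (k : ℝ)) / (1 + k) * ((b + k) / (c + k)) * z)
    (l := 1 * 1 * z) (by simpa using hz) ?_ ?_
  · exact (((tendsto_lin_ratio _ _).mul (tendsto_lin_ratio _ _)).mul_const _)
  · intro k
    have := (poch_pos' hc k).ne'
    have h2 : (0 : ℝ) < c + k := by positivity
    simp only [poch_succ', Nat.factorial_succ, pow_succ]
    push_cast
    field_simp
    ring

lemma binom_hasSum {γ z : ℝ} (hz : |z| < 1) :
    HasSum (fun n : ℕ => poch (-γ) n / (Nat.factorial n : ℝ) * z ^ n) ((1 - z) ^ γ) := by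
  have h := Real.one_div_one_sub_rpow_hasFPowerSeriesOnBall_zero (-γ)
  have hz' : z ∈ Metric.eball (0 : ℝ) 1 := by
    rw [← ENNReal.ofReal_one, Metric.eball_ofReal]; simpa using hz
  have h2 := h.hasSum hz'
  have hpos : 0 < 1 - z := by linarith [(abs_lt.1 hz).2]
  have e : (1 : ℝ) / (1 - (0 + z)) ^ (-γ) = (1 - z) ^ γ := by
    rw [zero_add, Real.rpow_neg hpos.le]; simp
  rw [e] at h2
  have e2 : ∀ n : ℕ, (FormalMultilinearSeries.ofScalars ℝ
      (fun n : ℕ => Ring.choose (-γ + (n : ℝ) - 1) n) n) (fun _ => z)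
      = poch (-γ) n / (Nat.factorial n : ℝ) * z ^ n := by
    intro n
    rw [FormalMultilinearSeries.ofScalars_apply_eq, smul_eq_mul]
    congr 1
    rw [← Ring.multichoose_eq]
    have h3 := Ring.factorial_nsmul_multichoose_eq_ascPochhammer (-γ) n
    rw [Polynomial.ascPochhammer_smeval_eq_eval] at h3
    have h4 : ∀ n, (ascPochhammer ℝ n).eval (-γ) = poch (-γ) n := by
      intro n
      induction n with
      | zero => simp [poch]
      | succ n ih => rw [ascPochhammer_succ_eval, poch_succ', ih]
    rw [h4] at h3
    rw [← h3, nsmul_eq_mul]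
    field_simp
  simp only [e2] at h2
  exact h2

open PowerSeries in
/-- Coefficientwise Euler transformation. -/
lemma euler_coeff {α β c : ℝ} (hc : 0 < c) (n : ℕ) :
    ∑ p ∈ Finset.HasAntidiagonal.antidiagonal n,
      (poch (-(c - α - β)) p.1 / (Nat.factorial p.1 : ℝ)) *
        ((poch (c - α) p.2 * poch (c - β) p.2) / ((Nat.factorial p.2 : ℝ) * poch c p.2))
      = (poch α n * poch β n) / ((Nat.factorial n : ℝ) * poch c n) := by
  set γ := c - α - β with hγ
  set P : PowerSeries ℝ := PowerSeries.mk (fun n => poch (-γ) n / (Nat.factorial n : ℝ)) with hP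
  set F : PowerSeries ℝ := PowerSeries.mk (fun n =>
    (poch (c - α) n * poch (c - β) n) / ((Nat.factorial n : ℝ) * poch c n)) with hF
  have hcoeff : ∀ n, PowerSeries.coeff n (P * F) = ∑ p ∈ Finset.HasAntidiagonal.antidiagonal n,
      (poch (-γ) p.1 / (Nat.factorial p.1 : ℝ)) *
        ((poch (c - α) p.2 * poch (c - β) p.2) / ((Nat.factorial p.2 : ℝ) * poch c p.2)) := by
    intro n
    rw [PowerSeries.coeff_mul]
    simp [hP, hF]
  let d := fun H : PowerSeries ℝ => PowerSeries.derivative ℝ H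
  have hd : ∀ (H : PowerSeries ℝ) n, PowerSeries.coeff n (d H)
      = PowerSeries.coeff (n+1) H * (n + 1) := by
    intro H n
    exact PowerSeries.coeff_derivative H n
  have hdm : ∀ H1 H2, d (H1 * H2) = H1 * d H2 + H2 * d H1 := by
    intro H1 H2
    simp [d]
  have P1 : (1 - X) * d P = - C γ * P := by
    ext n
    rw [sub_mul, one_mul, map_sub, neg_mul, map_neg, PowerSeries.coeff_C_mul, hd]
    rcases n with _ | n
    · simp [hP, poch_succ', poch_zero']
    · rw [PowerSeries.coeff_succ_X_mul, hd]
      simp only [hP, PowerSeries.coeff_mk, poch_succ', Nat.factorial_succ]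
      push_cast
      field_simp
      ring
  -- general: ODE coefficient
  have ode : ∀ (H : PowerSeries ℝ) (x y : ℝ) n, PowerSeries.coeff n
      (X * (1 - X) * d (d H) + (C c - C (x + y + 1) * X) * d H - C (x * y) * H)
      = (n + 1) * (n + c) * PowerSeries.coeff (n+1) H - (n + x) * (n + y) * PowerSeries.coeff n H := by
    intro H x y n
    have : X * (1 - X) * d (d H) + (C c - C (x + y + 1) * X) * d H - C (x * y) * H
      = X * d (d H) - X * (X * d (d H)) + C c * d H - C (x + y + 1) * (X * d H) - C (x * y) * H := by
      ring
    rw [this]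
    rw [map_sub, map_sub, map_add, map_sub, PowerSeries.coeff_C_mul, PowerSeries.coeff_C_mul,
      PowerSeries.coeff_C_mul]
    rcases n with _ | _ | n
    · simp [hd]
    · rw [PowerSeries.coeff_succ_X_mul, PowerSeries.coeff_succ_X_mul, PowerSeries.coeff_succ_X_mul]
      simp [hd]
      ring
    · simp only [PowerSeries.coeff_succ_X_mul, hd]
      push_cast
      ring
  have F1 : X * (1 - X) * d (d F) + (C c - C ((c - α) + (c - β) + 1) * X) * d F
      - C ((c - α) * (c - β)) * F = 0 := by
    ext n
    rw [ode]
    simp only [hF, PowerSeries.coeff_mk, poch_succ', Nat.factorial_succ, map_zero]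
    have := (poch_pos' hc n).ne'
    have h2 : (0 : ℝ) < c + n := by positivity
    push_cast
    field_simp
    ring
  have P2 : (1 - X) * d (d P) = C (1 - γ) * d P := by
    have := congrArg d P1
    rw [hdm, show - C γ * P = C (-γ) * P by simp, hdm] at this
    have e1 : d (1 - X) = -1 := by simp [d]
    have e2 : d (C (-γ)) = 0 := by simp only [d]; exact PowerSeries.derivative_C
    rw [e1, e2] at this
    simp only [map_neg, map_sub, map_one] at this ⊢
    linear_combination this
  have H1 : (1 - X) * (X * (1 - X) * d (d (P * F)) + (C c - C (α + β + 1) * X) * d (P * F)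
      - C (α * β) * (P * F)) = 0 := by
    have hdd : d (d (P * F)) = P * d (d F) + 2 * (d P * d F) + F * d (d P) := by
      rw [hdm, show d (P * d F + F * d P) = d (P * d F) + d (F * d P) by simp [d], hdm, hdm]
      ring
    rw [hdd, hdm]
    have hγ' : C γ = C c - C α - C β := by simp [hγ]
    simp only [map_add, map_sub, map_mul, map_one, hγ'] at P1 P2 F1 ⊢
    linear_combination (P * (1 - X)) * F1 + (X * (1 - X) * F) * P2 + (2 * X * (1 - X) * d F
      + (C c - (C α + C β + 1) * X) * F + X * F * (1 - (C c - C α - C β))) * P1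
  have H2 := (mul_eq_zero.1 H1).resolve_left (by
    intro h0
    have := congrArg (PowerSeries.coeff 0) h0
    simp at this)
  rw [← hcoeff]
  induction n with
  | zero => simp [hP, hF, poch_zero', PowerSeries.coeff_mul]
  | succ n ih =>
    have h3 := congrArg (PowerSeries.coeff n) H2
    rw [ode, map_zero, ih] at h3
    have := (poch_pos' hc n).ne'
    have h2 : (0 : ℝ) < n + c := by positivity
    have h4 : PowerSeries.coeff (n+1) (P * F) = (n + α) * (n + β) *
       ((poch α n * poch β n) / ((Nat.factorial n : ℝ) * poch c n)) / ((n + 1) * (n + c)) := by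
      rw [eq_div_iff (by positivity)]
      linarith
    rw [h4]
    simp only [poch_succ', Nat.factorial_succ]
    push_cast
    rw [add_comm c (n : ℝ)]
    field_simp
    ring

lemma euler_transform {α β c z : ℝ} (hc : 0 < c) (hz : |z| < 1) :
    hyp2F1 α β c z = (1 - z) ^ (c - α - β) * hyp2F1 (c - α) (c - β) c z := by
  have hb := binom_hasSum (γ := c - α - β) hz
  have hbs : Summable (fun n : ℕ =>
      ‖poch (-(c - α - β)) n / (Nat.factorial n : ℝ) * z ^ n‖) := by
    have := summable_hyp (a := -(c - α - β)) (b := c) hc hz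
    convert this using 2 with n
    have := (poch_pos' hc n).ne'
    congr 1
    field_simp
  have hF := summable_hyp (a := c - α) (b := c - β) hc hz
  rw [← hb.tsum_eq]
  unfold hyp2F1
  rw [tsum_mul_tsum_eq_tsum_sum_antidiagonal_of_summable_norm hbs hF]
  refine tsum_congr (fun n => ?_)
  rw [← euler_coeff hc n, Finset.sum_mul]
  refine Finset.sum_congr rfl (fun p hp => ?_)
  rw [← Finset.HasAntidiagonal.mem_antidiagonal.1 hp, pow_add]
  ring

/-- coefficients of `₂F₁(1/2,1/2;x;1)` -/
noncomputable def gA (x : ℝ) (k : ℕ) : ℝ :=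
  poch (1 / 2) k ^ 2 / ((Nat.factorial k : ℝ) * poch x k)

lemma gA_pos {x : ℝ} (hx : 0 < x) (k : ℕ) : 0 < gA x k := by
  unfold gA
  have := poch_pos' hx k
  have := poch_pos' (show (0:ℝ) < 1 / 2 by norm_num) k
  positivity

lemma gA_succ {x : ℝ} (hx : 0 < x) (k : ℕ) :
    gA x (k + 1) = gA x k * ((1 / 2 + k) ^ 2 / ((k + 1) * (x + k))) := by
  unfold gA
  have := poch_pos' hx k
  have h2 : (0 : ℝ) < x + k := by positivity
  simp only [poch_succ', Nat.factorial_succ]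
  push_cast
  field_simp

lemma gA_tele {x : ℝ} (hx : 0 < x) (k : ℕ) :
    (x - 1) * gA x k - (x - 1 / 2) ^ 2 / (x + k) * gA x k
      = k * gA x k - ((k + 1 : ℕ) : ℝ) * gA x (k + 1) := by
  rw [gA_succ hx]
  have h2 : (0 : ℝ) < x + k := by positivity
  push_cast
  field_simp
  ring

lemma gA_summable {x : ℝ} (hx : 1 < x) : Summable (gA x) := by
  have hx0 : 0 < x := by linarith
  obtain ⟨N, hN⟩ := exists_nat_gt (2 * (x - 1 / 2) ^ 2 / (x - 1))
  have key : ∀ k, (x - 1) / 2 * gA x (k + N) ≤ ((k + N : ℕ) : ℝ) * gA x (k + N)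
      - ((k + 1 + N : ℕ) : ℝ) * gA x (k + 1 + N) := by
    intro k
    have h1 := gA_tele hx0 (k + N)
    have h3 : (x - 1 / 2) ^ 2 / (x + ((k + N : ℕ) : ℝ)) ≤ (x - 1) / 2 := by
      have : (0 : ℝ) < x + ((k + N : ℕ) : ℝ) := by positivity
      rw [div_le_iff₀ this]
      rw [div_lt_iff₀ (by linarith)] at hN
      push_cast
      have : (0 : ℝ) ≤ (x - 1) * k := mul_nonneg (by linarith) (by positivity)
      nlinarith
    have h4 := gA_pos hx0 (k + N)
    rw [show k + 1 + N = k + N + 1 by ring]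
    nlinarith
  rw [← summable_nat_add_iff N]
  have : Summable (fun k => (x - 1) / 2 * gA x (k + N)) := by
    refine summable_of_sum_range_le (c := (N : ℝ) * gA x N)
      (fun k => mul_nonneg (by linarith) (gA_pos hx0 _).le) (fun n => ?_)
    calc _ ≤ ∑ k ∈ Finset.range n, (((k + N : ℕ) : ℝ) * gA x (k + N)
      - ((k + 1 + N : ℕ) : ℝ) * gA x (k + 1 + N)) := Finset.sum_le_sum (fun k _ => key k)
      _ = (N : ℝ) * gA x N - ((n + N : ℕ) : ℝ) * gA x (n + N) := by
        rw [Finset.sum_range_sub' (fun k => ((k + N : ℕ) : ℝ) * gA x (k + N))]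
        simp
      _ ≤ _ := by
        have := gA_pos hx0 (n + N)
        have : 0 ≤ ((n + N : ℕ) : ℝ) * gA x (n + N) := by positivity
        linarith
  exact (summable_mul_left_iff (by linarith)).1 this

lemma gA_shift {x : ℝ} (hx : 0 < x) (k : ℕ) : gA (x + 1) k = x / (x + k) * gA x k := by
  unfold gA
  have h1 := poch_succ' x k
  rw [poch_succ_left] at h1
  have := poch_pos' hx k
  have := poch_pos' (show 0 < x + 1 by linarith) k
  have h2 : (0 : ℝ) < x + k := by positivity
  field_simp
  linear_combination -poch (1 / 2) k ^ 2 * h1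

lemma gA_lim {x : ℝ} (hx : 1 < x) : Tendsto (fun k : ℕ => (k : ℝ) * gA x k) atTop (nhds 0) := by
  have hx0 : 0 < x := by linarith
  have hs := gA_summable hx
  have hs1 := gA_summable (x := x + 1) (by linarith)
  have hd : Summable (fun k : ℕ => (k : ℝ) * gA x k - ((k + 1 : ℕ) : ℝ) * gA x (k + 1)) := by
    have : Summable (fun k : ℕ => (x - 1) * gA x k - (x - 1 / 2) ^ 2 / x * gA (x + 1) k) :=
      (hs.mul_left _).sub (hs1.mul_left _)
    refine this.congr (fun k => ?_)
    rw [← gA_tele hx0, gA_shift hx0]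
    field_simp
  have h1 := hd.hasSum.tendsto_sum_nat
  simp_rw [Finset.sum_range_sub' (fun k : ℕ => (k : ℝ) * gA x k)] at h1
  set T := ∑' k : ℕ, ((k : ℝ) * gA x k - ((k + 1 : ℕ) : ℝ) * gA x (k + 1))
  have h2 : Tendsto (fun k : ℕ => (k : ℝ) * gA x k) atTop (nhds (-T)) := by
    have := h1.neg
    simpa using this
  rcases eq_or_lt_of_le (show 0 ≤ -T from ge_of_tendsto' h2 (fun k => mul_nonneg (by positivity) (gA_pos hx0 k).le)) with h | h
  · rwa [← h] at h2
  · exfalso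
    have h3 : ∀ᶠ k : ℕ in atTop, -T / 2 < k * gA x k := h2.eventually (lt_mem_nhds (by linarith))
    have h4 : Summable (fun k : ℕ => (-T / 2) * ((k : ℝ)⁻¹)) := by
      refine Summable.of_norm_bounded_eventually_nat hs ?_
      filter_upwards [h3, eventually_gt_atTop 0] with k hk hk0
      have : (0 : ℝ) < k := by exact_mod_cast hk0
      rw [Real.norm_of_nonneg (by positivity), ← div_eq_mul_inv, div_le_iff₀ this]
      linarith
    rw [summable_mul_left_iff (by linarith)] at h4
    exact Real.not_summable_natCast_inv h4

lemma gauss_rec {x : ℝ} (hx : 1 < x) :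
    (x * (x - 1)) * ∑' k, gA x k = (x - 1 / 2) ^ 2 * ∑' k, gA (x + 1) k := by
  have hx0 : 0 < x := by linarith
  have hs := gA_summable hx
  have hs1 := gA_summable (x := x + 1) (by linarith)
  have h0 : HasSum (fun k : ℕ => (x - 1) * gA x k - (x - 1 / 2) ^ 2 / x * gA (x + 1) k)
    ((x - 1) * ∑' k, gA x k - (x - 1 / 2) ^ 2 / x * ∑' k, gA (x + 1) k) :=
      (hs.hasSum.mul_left _).sub (hs1.hasSum.mul_left _)
  have h1 := h0.tendsto_sum_nat
  have e : ∀ k : ℕ, (x - 1) * gA x k - (x - 1 / 2) ^ 2 / x * gA (x + 1) k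
     = k * gA x k - ((k + 1 : ℕ) : ℝ) * gA x (k + 1) := by
    intro k
    rw [← gA_tele hx0, gA_shift hx0]
    field_simp
  simp_rw [e, Finset.sum_range_sub' (fun k : ℕ => (k : ℝ) * gA x k)] at h1
  have h2 := (gA_lim hx).neg
  have h3 := tendsto_nhds_unique h1 (by simpa using h2)
  field_simp at h3
  linarith

lemma gauss_iter {c : ℝ} (hc : 0 < c) (n : ℕ) :
    ∑' k, gA (c + 1) k = (poch (c + 1 / 2) n) ^ 2 / (poch (c + 1) n * poch c n)
      * ∑' k, gA (c + 1 + n) k := by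
  induction n with
  | zero => simp [poch_zero']
  | succ n ih =>
    rw [ih]
    have hn : (0 : ℝ) ≤ n := Nat.cast_nonneg n
    have h := gauss_rec (x := c + 1 + n) (by linarith)
    have := poch_pos' hc n
    have := poch_pos' (show 0 < c + 1 by linarith) n
    have h1 : ∑' k, gA (c + 1 + n) k = (c + 1 / 2 + n) ^ 2 / ((c + 1 + n) * (c + n))
        * ∑' k, gA (c + 1 + (n + 1 : ℕ)) k := by
      rw [show c + 1 + ((n + 1 : ℕ) : ℝ) = c + 1 + n + 1 by push_cast; ring]
      rw [show c + 1 + (n : ℝ) - 1 = c + n by ring,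
        show c + 1 + (n : ℝ) - 1 / 2 = c + 1 / 2 + n by ring] at h
      rw [div_mul_eq_mul_div, eq_div_iff (by positivity)]
      linarith
    rw [h1]
    simp only [poch_succ']
    rw [← mul_assoc, div_mul_div_comm]
    congr 1
    ring

lemma gauss_lim {c : ℝ} (hc : 0 < c) :
    Tendsto (fun n : ℕ => ∑' k, gA (c + 1 + n) k) atTop (nhds 1) := by
  have hs0 := gA_summable (x := c + 1) (by linarith)
  have hx0 : ∀ n : ℕ, (0 : ℝ) < c + 1 + n := fun n => by positivity
  have hb : ∀ (n k : ℕ), gA (c + 1 + n) k ≤ (if k = 0 then 1 else 0)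
      + (c + 1) / (c + 1 + n) * gA (c + 1) k := by
    intro n k
    rcases k with _ | k
    · have : 0 < gA (c + 1) 0 := gA_pos (by linarith) 0
      have : 0 < (c + 1) / (c + 1 + n) * gA (c + 1) 0 := by have := hx0 n; positivity
      simp only [if_true]
      have : gA (c + 1 + n) 0 = 1 := by simp [gA, poch_zero']
      linarith
    · simp only [Nat.succ_ne_zero, if_false, zero_add]
      unfold gA
      rw [poch_succ_left (c + 1 + n), poch_succ_left (c + 1)]
      have h1 : poch (c + 1 + 1) k ≤ poch (c + 1 + n + 1) k := by
        unfold poch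
        exact Finset.prod_le_prod (fun i _ => by positivity) (fun i _ => by
          have : (0 : ℝ) ≤ n := Nat.cast_nonneg n
          linarith)
      have h2 := poch_pos' (show 0 < c + 1 + 1 by linarith) k
      have h3 := poch_pos' (show (0:ℝ) < 1 / 2 by norm_num) (k + 1)
      have := hx0 n
      calc _ ≤ poch (1 / 2) (k + 1) ^ 2 / (((k + 1).factorial : ℝ) * ((c + 1 + n) * poch (c + 1 + 1) k)) := by
            gcongr
        _ = _ := by field_simp
  have h1 : ∀ n : ℕ, 1 ≤ ∑' k, gA (c + 1 + n) k := by
    intro n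
    have hs := gA_summable (x := c + 1 + n) (by have : (0 : ℝ) ≤ n := Nat.cast_nonneg n
                                                linarith)
    have := hs.le_tsum 0 (fun j _ => (gA_pos (hx0 n) j).le)
    simpa [gA, poch_zero'] using this
  have h2 : ∀ n : ℕ, ∑' k, gA (c + 1 + n) k ≤ 1 + (c + 1) / (c + 1 + n) * ∑' k, gA (c + 1) k := by
    intro n
    have hs := gA_summable (x := c + 1 + n) (by have : (0 : ℝ) ≤ n := Nat.cast_nonneg n
                                                linarith)
    have h3 : HasSum (fun k : ℕ => (if k = 0 then (1 : ℝ) else 0)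
      + (c + 1) / (c + 1 + n) * gA (c + 1) k) (1 + (c + 1) / (c + 1 + n) * ∑' k, gA (c + 1) k) :=
      (hasSum_ite_eq 0 1).add (hs0.hasSum.mul_left _)
    exact hasSum_le (hb n) hs.hasSum h3
  refine tendsto_of_tendsto_of_tendsto_of_le_of_le tendsto_const_nhds ?_ h1 h2
  have h4 : Tendsto (fun n : ℕ => (c + 1) / (c + 1 + n)) atTop (nhds 0) :=
    tendsto_const_nhds.div_atTop (tendsto_atTop_add_const_left _ _ tendsto_natCast_atTop_atTop)
  simpa using (h4.mul_const (∑' k, gA (c + 1) k)).const_add 1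

lemma gauss_sum {c : ℝ} (hc : 0 < c) :
    ∑' k, gA (c + 1) k = Real.Gamma (c + 1) * Real.Gamma c / Real.Gamma (c + 1 / 2) ^ 2 := by
  have h1 := ((Real.GammaSeq_tendsto_Gamma (c + 1)).mul (Real.GammaSeq_tendsto_Gamma c)).div
    ((Real.GammaSeq_tendsto_Gamma (c + 1 / 2)).pow 2)
    (pow_ne_zero 2 (Real.Gamma_pos_of_pos (by linarith)).ne')
  have h2 := h1.mul ((tendsto_add_atTop_iff_nat 1).2 (gauss_lim hc))
  rw [mul_one] at h2
  refine tendsto_nhds_unique ?_ h2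
  refine (tendsto_const_nhds (x := ∑' k, gA (c + 1) k)).congr' ?_
  filter_upwards [eventually_gt_atTop 0] with n hn
  have hn' : (0 : ℝ) < n := by exact_mod_cast hn
  rw [gauss_iter hc (n + 1)]
  congr 1
  simp only [Pi.mul_apply, Pi.div_apply, Pi.pow_apply]
  have e : ∀ x, Real.GammaSeq x n = (n : ℝ) ^ x * (Nat.factorial n) / poch x (n + 1) := by
    intro x; simp [Real.GammaSeq, poch]
  simp only [e]
  have := poch_pos' hc (n + 1)
  have := poch_pos' (show 0 < c + 1 by linarith) (n + 1)
  have := poch_pos' (show 0 < c + 1 / 2 by linarith) (n + 1)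
  have hf : (0 : ℝ) < (Nat.factorial n) := by positivity
  have e2 : ((n : ℝ) ^ (c + 1 / 2)) ^ 2 = (n : ℝ) ^ (c + 1) * (n : ℝ) ^ c := by
    rw [← Real.rpow_natCast, ← Real.rpow_mul hn'.le, ← Real.rpow_add hn']
    congr 1; push_cast; ring
  have p1 : 0 < (n : ℝ) ^ (c + 1) := by positivity
  have p2 : 0 < (n : ℝ) ^ c := by positivity
  have p3 : 0 < (n : ℝ) ^ (c + 1 / 2) := by positivity
  rw [div_pow, mul_pow, e2]
  field_simp

/-- coefficients of `₂F₁(-1/2,-1/2;c;z)` -/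
noncomputable def tco (c : ℝ) (k : ℕ) : ℝ :=
  (poch (-(1 / 2)) k * poch (-(1 / 2)) k) / ((Nat.factorial k : ℝ) * poch c k)

lemma tco_nonneg {c : ℝ} (hc : 0 < c) (k : ℕ) : 0 ≤ tco c k := by
  unfold tco
  have := poch_pos' hc k
  exact div_nonneg (mul_self_nonneg _) (by positivity)

lemma tco_succ {c : ℝ} (hc : 0 < c) (k : ℕ) :
    ((k + 1 : ℕ) : ℝ) * tco c (k + 1) = 1 / (4 * c) * gA (c + 1) k := by
  unfold tco gA
  rw [poch_succ_left, poch_succ_left c, Nat.factorial_succ,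
    show -(1 / 2) + 1 = (1 / 2 : ℝ) by norm_num]
  have := poch_pos' (show 0 < c + 1 by linarith) k
  push_cast
  field_simp
  ring

lemma tco_hasSum {c : ℝ} (hc : 0 < c) :
    HasSum (fun k : ℕ => (k : ℝ) * tco c k) (Real.Gamma c ^ 2 / (4 * Real.Gamma (c + 1 / 2) ^ 2)) := by
  have h := (gA_summable (x := c + 1) (by linarith)).hasSum.mul_left (1 / (4 * c))
  rw [gauss_sum hc] at h
  simp_rw [← tco_succ hc] at h
  have h2 := (hasSum_nat_add_iff (f := fun k : ℕ => (k : ℝ) * tco c k) 1).1 h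
  have e : 1 / (4 * c) * (Real.Gamma (c + 1) * Real.Gamma c / Real.Gamma (c + 1 / 2) ^ 2)
      + ∑ i ∈ Finset.range 1, (i : ℝ) * tco c i
      = Real.Gamma c ^ 2 / (4 * Real.Gamma (c + 1 / 2) ^ 2) := by
    have := (Real.Gamma_pos_of_pos (show 0 < c + 1 / 2 by linarith)).ne'
    rw [Real.Gamma_add_one hc.ne']
    simp only [Finset.range_one, Finset.sum_singleton, Nat.cast_zero, zero_mul, add_zero]
    field_simp
  rw [e] at h2
  exact h2

lemma tco_summable {c : ℝ} (hc : 0 < c) : Summable (tco c) := by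
  refine Summable.of_norm_bounded_eventually_nat (tco_hasSum hc).summable ?_
  filter_upwards [eventually_ge_atTop 1] with k hk
  have : (1 : ℝ) ≤ k := by exact_mod_cast hk
  have h2 := tco_nonneg hc k
  rw [Real.norm_of_nonneg h2]
  nlinarith

lemma integrable_tsum_of {X : Type*} [MeasurableSpace X] {μ : Measure X} {F : ℕ → X → ℝ}
    (hF : ∀ i, Integrable (F i) μ) (hs : Summable fun i => ∫ x, ‖F i x‖ ∂μ) :
    Integrable (fun x => ∑' i, F i x) μ := by
  refine ⟨(AEMeasurable.tsum (fun i => (hF i).1.aemeasurable)).aestronglyMeasurable, ?_⟩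
  unfold HasFiniteIntegral
  calc ∫⁻ x, ‖∑' i, F i x‖ₑ ∂μ ≤ ∫⁻ x, ∑' i, ‖F i x‖ₑ ∂μ :=
        lintegral_mono (fun x => enorm_tsum_le_tsum_enorm)
    _ = ∑' i, ∫⁻ x, ‖F i x‖ₑ ∂μ := lintegral_tsum (fun i => (hF i).1.enorm)
    _ = ∑' i, ENNReal.ofReal (∫ x, ‖F i x‖ ∂μ) := by
        refine tsum_congr (fun i => ?_)
        rw [ofReal_integral_norm_eq_lintegral_enorm (hF i)]
    _ < ⊤ := by
        rw [← ENNReal.ofReal_tsum_of_nonneg (fun i => integral_nonneg (fun x => norm_nonneg _)) hs]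
        exact ENNReal.ofReal_lt_top

/-- coefficients of the derivative of `exp(-q t) ∑ c_k t^k` -/
noncomputable def Lop (q : ℝ) (c : ℕ → ℝ) (k : ℕ) : ℝ := ((k : ℝ) + 1) * c (k + 1) - q * c k

def Ent (c : ℕ → ℝ) : Prop := ∀ R : ℝ, Summable (fun k => ‖c k * R ^ k‖)

lemma nat_le_two_pow_real (k : ℕ) : (k : ℝ) ≤ 2 ^ k := by
  exact_mod_cast (Nat.lt_two_pow_self (n := k)).le

lemma Ent.der {c : ℕ → ℝ} (hc : Ent c) : Ent (fun k => ((k : ℝ) + 1) * c (k + 1)) := by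
  intro R
  have h := (summable_nat_add_iff 1).2 (hc (2 * (|R| + 1)))
  refine Summable.of_nonneg_of_le (fun k => norm_nonneg _) (fun k => ?_) h
  rw [norm_mul, norm_mul, norm_mul, norm_pow, norm_pow, Real.norm_eq_abs R,
    Real.norm_of_nonneg (show 0 ≤ 2 * (|R| + 1) by positivity),
    Real.norm_of_nonneg (show 0 ≤ (k : ℝ) + 1 by positivity), mul_pow]
  have h1 := nat_le_two_pow_real (k + 1)
  push_cast at h1
  have h2 : |R| ^ k ≤ (|R| + 1) ^ (k + 1) :=
    calc |R| ^ k ≤ (|R| + 1) ^ k := pow_le_pow_left₀ (abs_nonneg _) (by linarith) _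
      _ ≤ _ := pow_le_pow_right₀ (by linarith [abs_nonneg R]) (Nat.le_succ k)
  calc (k + 1) * ‖c (k + 1)‖ * |R| ^ k = ‖c (k + 1)‖ * (((k : ℝ) + 1) * |R| ^ k) := by ring
    _ ≤ _ := by gcongr

lemma Ent.L {c : ℕ → ℝ} (hc : Ent c) (q : ℝ) : Ent (Lop q c) := by
  intro R
  refine Summable.of_nonneg_of_le (fun k => norm_nonneg _) (fun k => ?_)
    ((hc.der R).add ((hc R).mul_left |q|))
  unfold Lop
  rw [sub_mul]
  refine (norm_sub_le _ _).trans ?_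
  rw [mul_assoc q, norm_mul q, Real.norm_eq_abs q]

lemma Ent.hasDerivAt {c : ℕ → ℝ} (hc : Ent c) (t : ℝ) :
    HasDerivAt (fun t : ℝ => ∑' k, c k * t ^ k) (∑' k : ℕ, ((k : ℝ) + 1) * c (k + 1) * t ^ k) t := by
  set R := |t| + 1 with hR
  have hsum := (hc.der R)
  have key := hasDerivAt_tsum_of_isPreconnected (t := Metric.ball (0 : ℝ) R) (y₀ := 0) (y := t)
    (u := fun k : ℕ => ‖c k * ((k : ℝ) * R ^ (k - 1))‖)
    (g := fun k (t : ℝ) => c k * t ^ k) (g' := fun k t => c k * ((k : ℝ) * t ^ (k - 1))) ?_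
    Metric.isOpen_ball (convex_ball _ _).isPreconnected ?_ ?_ ?_ ?_ ?_
  · refine key.congr_deriv ?_
    have hs : Summable (fun k : ℕ => c k * ((k : ℝ) * t ^ (k - 1))) := by
      rw [← summable_nat_add_iff 1]
      refine ((hc.der t).of_norm).congr (fun k => ?_)
      simp; ring
    rw [hs.tsum_eq_zero_add]
    simp
    refine tsum_congr (fun k => ?_)
    ring
  · rw [← summable_nat_add_iff 1]
    refine hsum.congr (fun k => ?_)
    simp; ring
  · intro n y _
    exact (hasDerivAt_pow n y).const_mul (c n)
  · intro n y hy
    rw [norm_mul, norm_mul, norm_mul, norm_mul, norm_pow, norm_pow]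
    have : ‖y‖ ≤ ‖R‖ := by
      rw [mem_ball_zero_iff] at hy
      exact hy.le.trans (le_abs_self R)
    gcongr
  · simp [hR]; positivity
  · exact (hc 0).of_norm
  · simp [hR]

lemma Ent.hasDerivAt_exp {c : ℕ → ℝ} (hc : Ent c) (q t : ℝ) :
    HasDerivAt (fun t : ℝ => Real.exp (-q * t) * ∑' k, c k * t ^ k)
      (Real.exp (-q * t) * ∑' k, Lop q c k * t ^ k) t := by
  have h1 : HasDerivAt (fun t : ℝ => Real.exp (-q * t)) (Real.exp (-q * t) * (-q * 1)) t :=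
    ((hasDerivAt_id t).const_mul (-q)).exp
  have h := h1.mul (hc.hasDerivAt t)
  have e : ∑' k, Lop q c k * t ^ k = ∑' k : ℕ, ((k : ℝ) + 1) * c (k + 1) * t ^ k
      - q * ∑' k, c k * t ^ k := by
    rw [← tsum_mul_left, ← ((hc.der t).of_norm).tsum_sub ((hc t).of_norm.mul_left q)]
    refine tsum_congr (fun k => ?_)
    unfold Lop; ring
  rw [e]
  refine h.congr_deriv ?_
  ring

/-- `exp(-q t) ∑ c_k t^k` -/
noncomputable def EP (q : ℝ) (c : ℕ → ℝ) (t : ℝ) : ℝ := Real.exp (-q * t) * ∑' k, c k * t ^ k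

lemma EP_deriv3 {c : ℕ → ℝ} (hc : Ent c) (q Q : ℝ) :
    deriv^[3] (fun b : ℝ => Q * EP q c (b ^ 2)) = fun b => Q * (12 * (b * EP q (Lop q (Lop q c)) (b ^ 2))
      + 8 * (b ^ 3 * EP q (Lop q (Lop q (Lop q c))) (b ^ 2))) := by
  have hd : ∀ {c : ℕ → ℝ}, Ent c → ∀ b : ℝ, HasDerivAt (fun b : ℝ => EP q c (b ^ 2))
      (EP q (Lop q c) (b ^ 2) * (2 * b)) b := by
    intro c hc b
    have h1 : HasDerivAt (fun b : ℝ => b ^ 2) (2 * b) b := by simpa using hasDerivAt_pow 2 b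
    exact HasDerivAt.comp b (hc.hasDerivAt_exp q (b ^ 2)) h1
  have d1 : deriv (fun b : ℝ => Q * EP q c (b ^ 2)) =
      fun b => Q * (EP q (Lop q c) (b ^ 2) * (2 * b)) := by
    funext b
    exact ((hd hc b).const_mul Q).deriv
  have d2 : deriv (fun b => Q * (EP q (Lop q c) (b ^ 2) * (2 * b))) =
      fun b => Q * (EP q (Lop q (Lop q c)) (b ^ 2) * (4 * b ^ 2) + 2 * EP q (Lop q c) (b ^ 2)) := by
    funext b
    refine (((hd (hc.L q) b).fun_mul ((hasDerivAt_id b).const_mul 2)).const_mul Q).deriv.trans ?_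
    simp only [id]
    ring
  have d3 : deriv (fun b => Q * (EP q (Lop q (Lop q c)) (b ^ 2) * (4 * b ^ 2)
        + 2 * EP q (Lop q c) (b ^ 2))) =
      fun b => Q * (12 * (b * EP q (Lop q (Lop q c)) (b ^ 2))
      + 8 * (b ^ 3 * EP q (Lop q (Lop q (Lop q c))) (b ^ 2))) := by
    funext b
    refine ((((hd ((hc.L q).L q) b).fun_mul ((hasDerivAt_pow 2 b).const_mul 4)).fun_add
      ((hd (hc.L q) b).const_mul 2)).const_mul Q).deriv.trans ?_
    simp only [Nat.cast_ofNat]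
    ring
  simp only [Function.iterate_succ, Function.iterate_zero, Function.comp, id]
  rw [d1, d2, d3]

def Wt (q : ℝ) (c : ℕ → ℝ) : Prop := ∀ α : ℝ, 0 < α → Summable (fun k => ‖c k‖ * poch α k / q ^ k)

lemma Wt.summable {q : ℝ} (hq : 0 < q) {c : ℕ → ℝ} (hc : Wt q c) (β : ℝ) :
    Summable (fun k => c k * poch β k / q ^ k) := by
  refine Summable.of_norm_bounded (hc (|β| + 1) (by positivity)) (fun k => ?_)
  rw [norm_div, norm_mul, norm_pow, Real.norm_of_nonneg hq.le]
  gcongr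
  exact abs_poch_le β k

lemma Wt.L {q : ℝ} (hq : 0 < q) {c : ℕ → ℝ} (hc : Wt q c) : Wt q (Lop q c) := by
  intro α hα
  have h1 := (((summable_nat_add_iff 1).2 (hc α hα)).mul_left (q * (1 + 1 / α)))
  refine Summable.of_nonneg_of_le (fun k => ?_) (fun k => ?_) (h1.add ((hc α hα).mul_left q))
  · have := poch_pos' hα k
    positivity
  · have := poch_pos' hα k
    have h2 : ‖Lop q c k‖ ≤ (k + 1) * ‖c (k + 1)‖ + q * ‖c k‖ := by
      unfold Lop
      refine (norm_sub_le _ _).trans ?_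
      rw [norm_mul, norm_mul, Real.norm_of_nonneg hq.le,
        Real.norm_of_nonneg (show 0 ≤ (k : ℝ) + 1 by positivity)]
    calc ‖Lop q c k‖ * poch α k / q ^ k
        ≤ ((k + 1) * ‖c (k + 1)‖ + q * ‖c k‖) * poch α k / q ^ k := by gcongr
      _ = q * ((k + 1) * (‖c (k + 1)‖ * poch α k / q ^ (k + 1))) + q * (‖c k‖ * poch α k / q ^ k) := by
          rw [pow_succ]; field_simp
      _ ≤ q * (((1 + 1 / α) * (α + k)) * (‖c (k + 1)‖ * poch α k / q ^ (k + 1)))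
          + q * (‖c k‖ * poch α k / q ^ k) := by
          gcongr
          have : (0:ℝ) ≤ k / α := by positivity
          have e : (1 + 1 / α) * (α + k) = α + k + 1 + k / α := by field_simp; ring
          rw [e]; linarith
      _ = _ := by rw [poch_succ']; ring

lemma V_L {q : ℝ} (hq : 0 < q) {c : ℕ → ℝ} (hc : Wt q c) (β : ℝ) :
    ∑' k, Lop q c k * poch (β + 1) k / q ^ k = -q * ∑' k, c k * poch β k / q ^ k := by
  have s1 := hc.summable hq (β + 1)
  have s0 := hc.summable hq β
  have hx : HasSum (fun j => q * (c j * poch (β + 1) j / q ^ j) - q * (c j * poch β j / q ^ j))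
    (q * ∑' j, c j * poch (β + 1) j / q ^ j - q * ∑' j, c j * poch β j / q ^ j) :=
    (s1.hasSum.mul_left q).sub (s0.hasSum.mul_left q)
  have hx1 := (hasSum_nat_add_iff' 1).2 hx
  simp only [Finset.range_one, Finset.sum_singleton, poch_zero', sub_self, sub_zero] at hx1
  have h2 := hx1.sub (s1.hasSum.mul_left q)
  have e : ∀ k, Lop q c k * poch (β + 1) k / q ^ k =
      q * (c (k + 1) * poch (β + 1) (k + 1) / q ^ (k + 1)) - q * (c (k + 1) * poch β (k + 1) / q ^ (k + 1))
      - q * (c k * poch (β + 1) k / q ^ k) := by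
    intro k
    unfold Lop
    rw [poch_succ', poch_succ_left, pow_succ]
    field_simp
    ring
  simp_rw [e]
  rw [h2.tsum_eq]
  ring

lemma EP_integral {q a : ℝ} (hq : 0 < q) (ha : 0 < a) {c : ℕ → ℝ} (hc : Wt q c) :
    IntegrableOn (fun b : ℝ => b ^ (2 * a - 1) * EP q c (b ^ 2)) (Set.Ioi 0) ∧
    ∫ b in Set.Ioi (0 : ℝ), b ^ (2 * a - 1) * EP q c (b ^ 2)
      = 1 / 2 * Real.Gamma a * q ^ (-a) * ∑' k, c k * poch a k / q ^ k := by
  have hG := Real.Gamma_pos_of_pos ha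
  let F : ℕ → ℝ → ℝ := fun k b => c k * (b ^ (2 * a - 1 + 2 * k) * Real.exp (-q * b ^ 2))
  have hint0 : ∀ k : ℕ, IntegrableOn
      (fun b : ℝ => b ^ (2 * a - 1 + 2 * k) * Real.exp (-q * b ^ 2)) (Set.Ioi 0) := by
    intro k
    exact integrableOn_rpow_mul_exp_neg_mul_sq hq (by
      have : (0 : ℝ) ≤ k := Nat.cast_nonneg k
      linarith)
  have hval : ∀ k : ℕ, ∫ b in Set.Ioi (0 : ℝ), b ^ (2 * a - 1 + 2 * k) * Real.exp (-q * b ^ 2)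
      = 1 / 2 * Real.Gamma a * q ^ (-a) * (poch a k / q ^ k) := by
    intro k
    have hk : (0 : ℝ) ≤ k := Nat.cast_nonneg k
    have := integral_rpow_mul_exp_neg_mul_rpow (p := 2) (q := 2 * a - 1 + 2 * k) (b := q) two_pos
      (by linarith) hq
    simp_rw [Real.rpow_two] at this
    rw [this, show (2 * a - 1 + 2 * k + 1) / 2 = (k : ℝ) + a by ring, Gamma_add_nat' ha,
      show -(2 * a - 1 + 2 * k + 1) / 2 = -a - (k : ℝ) by ring, Real.rpow_sub hq, Real.rpow_natCast]
    ring
  have hint : ∀ k, Integrable (F k) (volume.restrict (Set.Ioi 0)) := fun k => (hint0 k).const_mul _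
  have hnorm : ∀ k, ∫ b in Set.Ioi (0 : ℝ), ‖F k b‖
      = 1 / 2 * Real.Gamma a * q ^ (-a) * (‖c k‖ * poch a k / q ^ k) := by
    intro k
    have : ∫ b in Set.Ioi (0 : ℝ), ‖F k b‖ = ∫ b in Set.Ioi (0 : ℝ),
        ‖c k‖ * (b ^ (2 * a - 1 + 2 * k) * Real.exp (-q * b ^ 2)) := by
      refine setIntegral_congr_fun measurableSet_Ioi (fun b hb => ?_)
      have hb' : (0 : ℝ) < b := hb
      simp only [F]
      rw [norm_mul, Real.norm_of_nonneg (show 0 ≤ b ^ (2 * a - 1 + 2 * k) * Real.exp (-q * b ^ 2) by positivity)]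
    rw [this, integral_const_mul, hval]
    ring
  have hsum : Summable (fun k => ∫ b in Set.Ioi (0 : ℝ), ‖F k b‖) := by
    simp_rw [hnorm]
    exact (hc a ha).mul_left _
  have heq : Set.EqOn (fun b : ℝ => ∑' k, F k b) (fun b => b ^ (2 * a - 1) * EP q c (b ^ 2)) (Set.Ioi 0) := by
    intro b hb
    have hb' : (0 : ℝ) < b := hb
    simp only [F, EP]
    rw [← mul_assoc, ← tsum_mul_left]
    refine tsum_congr (fun k => ?_)
    rw [Real.rpow_add hb', show (2 : ℝ) * k = ((2 * k : ℕ) : ℝ) by push_cast; ring, Real.rpow_natCast, pow_mul]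
    ring
  constructor
  · exact IntegrableOn.congr_fun (integrable_tsum_of hint hsum) heq measurableSet_Ioi
  · rw [← setIntegral_congr_fun measurableSet_Ioi heq,
      ← (hasSum_integral_of_summable_integral_norm hint hsum).tsum_eq, ← tsum_mul_left]
    refine tsum_congr (fun k => ?_)
    simp only [F]
    rw [integral_const_mul, hval]
    ring

lemma EP_integral3 {q δ : ℝ} (hq : 0 < q) (hδ : 0 < δ) {c : ℕ → ℝ} (hc : Wt q c) (he : Ent c) (Q : ℝ) :
    ∫ b in Set.Ioi (0 : ℝ), b ^ (δ - 1) * deriv^[3] (fun b : ℝ => Q * EP q c (b ^ 2)) b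
      = -2 * (δ - 2) * Q * Real.Gamma ((δ + 1) / 2) * q ^ (2 - (δ + 1) / 2)
        * ∑' k, c k * poch ((δ + 1) / 2 - 2) k / q ^ k := by
  set a := (δ + 1) / 2 with ha
  have ha0 : 0 < a := by rw [ha]; linarith
  rw [EP_deriv3 he]
  obtain ⟨i1, v1⟩ := EP_integral (a := a) hq ha0 ((hc.L hq).L hq)
  obtain ⟨i2, v2⟩ := EP_integral (a := a + 1) hq (by linarith) (((hc.L hq).L hq).L hq)
  have e : ∫ b in Set.Ioi (0 : ℝ), b ^ (δ - 1) * (Q * (12 * (b * EP q (Lop q (Lop q c)) (b ^ 2))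
      + 8 * (b ^ 3 * EP q (Lop q (Lop q (Lop q c))) (b ^ 2)))) =
    ∫ b in Set.Ioi (0 : ℝ), ((Q * 12) * (b ^ (2 * a - 1) * EP q (Lop q (Lop q c)) (b ^ 2))
      + (Q * 8) * (b ^ (2 * (a + 1) - 1) * EP q (Lop q (Lop q (Lop q c))) (b ^ 2))) := by
    refine setIntegral_congr_fun measurableSet_Ioi (fun b hb => ?_)
    have hb' : (0 : ℝ) < b := hb
    have e1 : b ^ (2 * a - 1) = b ^ (δ - 1) * b := by
      rw [← Real.rpow_add_one hb'.ne']; congr 1; rw [ha]; ring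
    have e2 : b ^ (2 * (a + 1) - 1) = b ^ (δ - 1) * b ^ 3 := by
      rw [← Real.rpow_add_natCast hb'.ne']; congr 1; rw [ha]; push_cast; ring
    rw [e1, e2]; ring
  rw [e, integral_add (i1.const_mul _) (i2.const_mul _), integral_const_mul, integral_const_mul, v1, v2]
  rw [V_L hq ((hc.L hq).L hq) a]
  have h3 : ∑' k, Lop q (Lop q c) k * poch a k / q ^ k = q ^ 2 * ∑' k, c k * poch (a - 2) k / q ^ k := by
    have h4 := V_L hq (hc.L hq) (a - 1)
    have h5 := V_L hq hc (a - 2)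
    rw [show a - 1 + 1 = a by ring] at h4
    rw [show a - 2 + 1 = a - 1 by ring] at h5
    rw [h4, h5]; ring
  rw [h3, Real.Gamma_add_one ha0.ne', show -(a + 1) = -a - 1 by ring, Real.rpow_sub_one hq.ne',
    show 2 - a = -a + (2 : ℕ) by push_cast; ring, Real.rpow_add_natCast hq.ne']
  have : δ = 2 * a - 1 := by rw [ha]; ring
  rw [this]
  field_simp
  ring

lemma Ccoef_succ {δ : ℝ} (hδ : 0 < δ) (k : ℕ) : Ccoef δ k =
    Real.Gamma ((δ + 1) / 2) / Real.Gamma (δ / 2) ^ 2 *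
      (poch ((δ + 1) / 2) k / ((Nat.factorial k : ℝ) * poch (δ / 2) k)) := by
  unfold Ccoef
  rw [Gamma_add_nat' (by linarith), Gamma_add_nat' (by linarith)]
  have := poch_pos' (show 0 < δ / 2 by linarith) k
  have := Real.Gamma_pos_of_pos (show 0 < δ / 2 by linarith)
  field_simp

lemma Ccoef_Wt {δ q E : ℝ} (hδ : 0 < δ) (hq : 0 < q) (hE : |E / q| < 1) :
    Wt q (fun k => Ccoef δ k * E ^ k) := by
  intro α hα
  have h := (summable_hyp (a := (δ + 1) / 2) (b := α) (c := δ / 2) (by linarith) hE).mul_left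
    (Real.Gamma ((δ + 1) / 2) / Real.Gamma (δ / 2) ^ 2)
  refine h.congr (fun k => ?_)
  have h1 := poch_pos' (show 0 < δ / 2 by linarith) k
  have h2 := Real.Gamma_pos_of_pos (show 0 < δ / 2 by linarith)
  have h3 := Real.Gamma_pos_of_pos (show 0 < (δ + 1) / 2 by linarith)
  have h4 := poch_pos' (show 0 < (δ + 1) / 2 by linarith) k
  have h5 := poch_pos' hα k
  show _ = ‖Ccoef δ k * E ^ k‖ * poch α k / q ^ k
  rw [Ccoef_succ hδ, norm_mul, norm_mul, norm_pow, norm_pow, norm_div E q, Real.norm_of_nonneg hq.le,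
    Real.norm_of_nonneg (show 0 ≤ poch ((δ + 1) / 2) k * poch α k / (↑k.factorial * poch (δ / 2) k) by positivity),
    Real.norm_of_nonneg (show 0 ≤ Real.Gamma ((δ + 1) / 2) / Real.Gamma (δ / 2) ^ 2 *
      (poch ((δ + 1) / 2) k / (↑k.factorial * poch (δ / 2) k)) by positivity), div_pow]
  ring

lemma Ccoef_Ent {δ : ℝ} (hδ : 0 < δ) (E : ℝ) : Ent (fun k => Ccoef δ k * E ^ k) := by
  intro R
  refine summable_ratio (ρ := fun k : ℕ => ((δ + 1) / 2 + (k : ℝ)) / (δ / 2 + k) * ((E * R) / (1 + k)))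
    (l := 1 * 0) (by simp) ?_ ?_
  · exact (tendsto_lin_ratio _ _).mul
      (tendsto_const_nhds.div_atTop (tendsto_atTop_add_const_left _ _ tendsto_natCast_atTop_atTop))
  · intro k
    simp only [Ccoef_succ hδ]
    have h1 := poch_pos' (show 0 < δ / 2 by linarith) k
    have h2 : 0 < δ / 2 + k := by positivity
    have := Real.Gamma_pos_of_pos (show 0 < δ / 2 by linarith)
    simp only [poch_succ', Nat.factorial_succ, pow_succ]
    push_cast
    field_simp
    ring

lemma sigma_integral {q δ E : ℝ} (hq : 0 < q) (hδ : 0 < δ) (hE : |E / q| < 1) (Q : ℝ) :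
    ∫ b in Set.Ioi (0 : ℝ), b ^ (δ - 1) *
        deriv^[3] (fun b : ℝ => Q * EP q (fun k => Ccoef δ k * E ^ k) (b ^ 2)) b
      = -(δ - 2) * Q * Kcoef δ * q ^ (2 - (δ + 1) / 2)
        * hyp2F1 ((δ + 1) / 2) ((δ + 1) / 2 - 2) (δ / 2) (E / q) := by
  rw [EP_integral3 hq hδ (Ccoef_Wt hδ hq hE) (Ccoef_Ent hδ E)]
  have : ∑' k, Ccoef δ k * E ^ k * poch ((δ + 1) / 2 - 2) k / q ^ k =
      Real.Gamma ((δ + 1) / 2) / Real.Gamma (δ / 2) ^ 2 *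
        hyp2F1 ((δ + 1) / 2) ((δ + 1) / 2 - 2) (δ / 2) (E / q) := by
    unfold hyp2F1
    rw [← tsum_mul_left]
    refine tsum_congr (fun k => ?_)
    rw [Ccoef_succ hδ, div_pow]
    ring
  rw [this]
  unfold Kcoef
  ring

noncomputable def zz (s r : ℝ) : ℝ := s * (1 - r) / (r * (1 - s))

noncomputable def gk0 (s : ℝ) (k : ℕ) (r : ℝ) : ℝ := √(s * (1 - s)) * √(r * (1 - r)) * zz s r ^ k

noncomputable def gk1 (s : ℝ) (k : ℕ) (r : ℝ) : ℝ :=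
  √(s * (1 - s)) * ((1 / 2 - r - k) / √(r * (1 - r))) * zz s r ^ k

noncomputable def gk2 (s : ℝ) (k : ℕ) (r : ℝ) : ℝ :=
  √(s * (1 - s)) * (((k : ℝ) ^ 2 - 1 / 4) / √(r * (1 - r)) ^ 3) * zz s r ^ k

lemma zz_pos {s r : ℝ} (hs : 0 < s) (hsr : s < r) (hr : r < 1) : 0 < zz s r := by
  unfold zz
  have : 0 < 1 - r := by linarith
  have : 0 < 1 - s := by linarith
  have : 0 < r := by linarith
  positivity

lemma one_sub_zz {s r : ℝ} (hs : 0 < s) (hsr : s < r) (hr : r < 1) :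
    1 - zz s r = (r - s) / (r * (1 - s)) := by
  unfold zz
  have : 0 < 1 - s := by linarith
  have : 0 < r := by linarith
  field_simp
  ring

lemma zz_lt {s r : ℝ} (hs : 0 < s) (hsr : s < r) (hr : r < 1) : zz s r < 1 := by
  have h := one_sub_zz hs hsr hr
  have h1 : 0 < 1 - s := by linarith
  have h2 : 0 < r := by linarith
  have h3 : 0 < r - s := by linarith
  have : 0 < (r - s) / (r * (1 - s)) := by positivity
  linarith

lemma zz_self {s : ℝ} (hs : 0 < s) (hs1 : s < 1) : zz s s = 1 := by
  unfold zz
  have : 0 < 1 - s := by linarith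
  field_simp

lemma zz_deriv {s r : ℝ} (hs1 : s < 1) (hr0 : 0 < r) (hr : r < 1) :
    HasDerivAt (zz s) (-zz s r / √(r * (1 - r)) ^ 2) r := by
  have h1 : 0 < 1 - s := by linarith
  have h2 : 0 < 1 - r := by linarith
  have h : HasDerivAt (fun r => s * (1 - r) / (r * (1 - s)))
      (((s * (-1)) * (r * (1 - s)) - s * (1 - r) * (1 * (1 - s))) / (r * (1 - s)) ^ 2) r := by
    refine HasDerivAt.fun_div (((hasDerivAt_id r).const_sub 1).const_mul s)
      ((hasDerivAt_id r).mul_const (1 - s)) (by positivity)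
  refine h.congr_deriv ?_
  rw [Real.sq_sqrt (by positivity)]
  unfold zz
  field_simp
  ring

lemma sqrt_deriv {r : ℝ} (hr0 : 0 < r) (hr : r < 1) :
    HasDerivAt (fun r => √(r * (1 - r))) ((1 / 2 - r) / √(r * (1 - r))) r := by
  have h2 : 0 < 1 - r := by linarith
  have h3 : 0 < √(r * (1 - r)) := Real.sqrt_pos.2 (by positivity)
  have h : HasDerivAt (fun r : ℝ => r * (1 - r)) (1 * (1 - r) + r * (-1)) r :=
    (hasDerivAt_id r).fun_mul ((hasDerivAt_id r).const_sub 1)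
  refine (h.sqrt (by positivity)).congr_deriv ?_
  field_simp
  ring

lemma gk0_deriv {s r : ℝ} (hs1 : s < 1) (hr0 : 0 < r) (hr : r < 1) (k : ℕ) :
    HasDerivAt (gk0 s k) (gk1 s k r) r := by
  have h2 : 0 < 1 - r := by linarith
  have h3 : 0 < √(r * (1 - r)) := Real.sqrt_pos.2 (by positivity)
  have h := ((sqrt_deriv hr0 hr).const_mul (√(s * (1 - s)))).fun_mul ((zz_deriv hs1 hr0 hr).fun_pow k)
  refine h.congr_deriv ?_
  unfold gk1
  rcases k with _ | k
  · simp
  · simp only [Nat.add_sub_cancel, pow_succ]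
    push_cast
    field_simp
    ring

lemma gk1_deriv {s r : ℝ} (hs1 : s < 1) (hr0 : 0 < r) (hr : r < 1) (k : ℕ) :
    HasDerivAt (gk1 s k) (gk2 s k r) r := by
  have h2 : 0 < 1 - r := by linarith
  have h3 : 0 < √(r * (1 - r)) := Real.sqrt_pos.2 (by positivity)
  have h4 : √(r * (1 - r)) ^ 2 = r * (1 - r) := Real.sq_sqrt (by positivity)
  have h5 : HasDerivAt (fun r : ℝ => 1 / 2 - r - (k : ℝ)) (-1) r :=
    ((hasDerivAt_id r).const_sub (1 / 2)).sub_const (k : ℝ)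
  have h := ((h5.fun_div (sqrt_deriv hr0 hr) h3.ne').const_mul (√(s * (1 - s)))).fun_mul
    ((zz_deriv hs1 hr0 hr).fun_pow k)
  refine h.congr_deriv ?_
  unfold gk2
  have e : (k : ℝ) * zz s r ^ (k - 1) * (-zz s r / √(r * (1 - r)) ^ 2)
      = -(k : ℝ) * zz s r ^ k / √(r * (1 - r)) ^ 2 := by
    rcases k with _ | k
    · simp
    · simp only [Nat.add_sub_cancel, pow_succ]; ring
  rw [e]
  generalize zz s r ^ k = Z
  generalize √(s * (1 - s)) = S
  generalize √(r * (1 - r)) = P at *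
  have e2 : (-1 * P - (1 / 2 - r - ↑k) * ((1 / 2 - r) / P)) / P ^ 2 =
    (-(r * (1 - r)) - (1 / 2 - r - ↑k) * (1 / 2 - r)) / P ^ 3 := by
    rw [← h4]; field_simp
  rw [e2]
  field_simp
  ring

lemma gk0_self {s : ℝ} (hs : 0 < s) (hs1 : s < 1) (k : ℕ) : gk0 s k s = s * (1 - s) := by
  have : 0 < 1 - s := by linarith
  unfold gk0
  rw [zz_self hs hs1, Real.mul_self_sqrt (by positivity)]; simp

lemma gk1_self {s : ℝ} (hs : 0 < s) (hs1 : s < 1) (k : ℕ) : gk1 s k s = 1 / 2 - s - k := by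
  have : 0 < 1 - s := by linarith
  have h3 : 0 < √(s * (1 - s)) := Real.sqrt_pos.2 (by positivity)
  unfold gk1
  rw [zz_self hs hs1, one_pow]
  field_simp

lemma twoPt_eq {δ s r : ℝ} (hδ : 0 < δ) (hs : 0 < s) (hsr : s < r) (hr : r < 1) :
    twoPt δ s r = Kcoef δ * ∑' k, tco (δ / 2) k * gk0 s k r := by
  have h1 : 0 < 1 - s := by linarith
  have h2 : 0 < 1 - r := by linarith
  have h3 : 0 < r - s := by linarith
  have h4 : 0 < r := by linarith
  have hz : |zz s r| < 1 := by rw [abs_of_pos (zz_pos hs hsr hr)]; exact zz_lt hs hsr hr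
  have e1 : ∑' k, tco (δ / 2) k * gk0 s k r = √(s * (1 - s)) * √(r * (1 - r)) *
      hyp2F1 (-(1/2)) (-(1/2)) (δ / 2) (zz s r) := by
    unfold hyp2F1
    rw [← tsum_mul_left]
    refine tsum_congr (fun k => ?_)
    unfold gk0 tco
    ring
  unfold twoPt
  rw [if_pos hsr]
  change _ * hyp2F1 _ _ _ (zz s r) = _
  rw [euler_transform (by linarith) hz, e1, one_sub_zz hs hsr hr,
    show δ / 2 - (δ + 1) / 2 = -(1 / 2) by ring,
    show -(1 / 2) - (δ + 1) / 2 = -(δ / 2 + 1) by ring, Real.rpow_neg (x := (r - s) / (r * (1 - s))) (by positivity),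
    Real.div_rpow h3.le (by positivity), ← Real.sqrt_eq_rpow,
    show -((δ + 1) / 2) = 1 / 2 - (δ / 2 + 1) by ring,
    Real.rpow_sub (x := r * (1 - s)) (by positivity), ← Real.sqrt_eq_rpow,
    Real.sqrt_mul hs.le, Real.sqrt_mul h4.le, Real.sqrt_mul hs.le, Real.sqrt_mul h4.le]
  have p1 : 0 < (r - s) ^ (δ / 2 + 1) := Real.rpow_pos_of_pos h3 _
  have p2 : 0 < (r * (1 - s)) ^ (δ / 2 + 1) := Real.rpow_pos_of_pos (by positivity) _
  generalize (r - s) ^ (δ / 2 + 1) = X at *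
  generalize (r * (1 - s)) ^ (δ / 2 + 1) = Y at *
  field_simp

lemma monomial_id {c s s' r r' d : ℝ} (hs : 0 < s) (hs' : 0 < s') (hr : 0 < r) (hr' : 0 < r') (hd : 0 < d) :
    ((2 : ℝ) ^ (c - 1) * (r * r') ^ c)⁻¹ * (√(2 * d) * √(s / r)) * (s' / (2 * d * r')) ^ (3 / 2 - c)
      = √(s * s') / √(r * r') ^ 3 * (d / (r * s')) ^ (c - 1) := by
  apply Real.log_injOn_pos (Set.mem_Ioi.2 (by positivity)) (Set.mem_Ioi.2 (by positivity))
  have l1 : Real.log ((s' / (2 * d * r')) ^ (3 / 2 - c)) =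
    (3 / 2 - c) * (Real.log s' - (Real.log 2 + Real.log d + Real.log r')) := by
    rw [Real.log_rpow (by positivity), Real.log_div (by positivity) (by positivity),
      Real.log_mul (by positivity) (by positivity), Real.log_mul (by positivity) (by positivity)]
  have l2 : Real.log ((d / (r * s')) ^ (c - 1)) =
    (c - 1) * (Real.log d - (Real.log r + Real.log s')) := by
    rw [Real.log_rpow (by positivity), Real.log_div (by positivity) (by positivity),
      Real.log_mul (by positivity) (by positivity)]
  have l3 : Real.log ((2 : ℝ) ^ (c - 1) * (r * r') ^ c) =
      (c - 1) * Real.log 2 + c * (Real.log r + Real.log r') := by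
    rw [Real.log_mul (by positivity) (by positivity), Real.log_rpow (by positivity),
      Real.log_rpow (by positivity), Real.log_mul (by positivity) (by positivity)]
  rw [Real.log_mul (by positivity) (by positivity), Real.log_mul (by positivity) (by positivity),
    Real.log_inv, l3, l1, Real.log_mul (by positivity) (by positivity), Real.log_mul (by positivity) (by positivity),
    Real.log_div (by positivity) (by positivity), l2, Real.log_pow, Real.log_sqrt (by positivity),
    Real.log_sqrt (by positivity), Real.log_sqrt (by positivity), Real.log_sqrt (by positivity),
    Real.log_mul (by positivity) (by positivity), Real.log_mul (by positivity) (by positivity),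
    Real.log_mul (by positivity) (by positivity), Real.log_div (by positivity) (by positivity)]
  push_cast
  ring

lemma sigma_eq {δ s r : ℝ} (hs : 0 < s) (hsr : s < r) (hr : r < 1) :
    SigmaRS δ r s = fun b => (((2 : ℝ) ^ (δ / 2 - 1) * (r * (1 - r)) ^ (δ / 2))⁻¹ *
      (√(2 * (r - s)) * √(s / r))) * EP ((1 - s) / (2 * (r - s) * (1 - r)))
        (fun k => Ccoef δ k * (s / (2 * r * (r - s))) ^ k) (b ^ 2) := by
  have h1 : 0 < 1 - s := by linarith
  have h2 : 0 < 1 - r := by linarith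
  have h3 : 0 < r - s := by linarith
  have h4 : 0 < r := by linarith
  funext b
  have hf : ∀ k, fcoef s r k = √(2 * (r - s)) * √(s / r) * (s / (2 * r * (r - s))) ^ k := by
    intro k
    unfold fcoef
    rw [if_pos hsr, Real.rpow_sub (by positivity), Real.rpow_add (by positivity), ← Real.sqrt_eq_rpow,
      ← Real.sqrt_eq_rpow, Real.rpow_natCast, Real.rpow_natCast,
      show s / (2 * r * (r - s)) = (s / r) / (2 * (r - s)) by field_simp, div_pow (s / r)]
    ring
  have e : ∑' k : ℕ, Ccoef δ k * fcoef s r k * b ^ (2 * k) = √(2 * (r - s)) * √(s / r) *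
      ∑' k : ℕ, Ccoef δ k * (s / (2 * r * (r - s))) ^ k * (b ^ 2) ^ k := by
    rw [← tsum_mul_left]
    refine tsum_congr (fun k => ?_)
    rw [hf, pow_mul]; ring
  unfold SigmaRS EP Dcoef
  rw [e, if_pos hsr]
  have : -((1 - s) / ((r - s) * (1 - r))) * b ^ 2 / 2 = -((1 - s) / (2 * (r - s) * (1 - r))) * b ^ 2 := by
    field_simp
  rw [this]
  ring

/-- `(-1/2)_k (k^2 - 1/4) = -1/4 (3/2)_k` -/
lemma poch_shift (k : ℕ) : poch (-(1 / 2)) k * ((k : ℝ) ^ 2 - 1 / 4) = -(1 / 4) * poch (3 / 2) k := by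
  induction k with
  | zero => simp [poch_zero']
  | succ k ih =>
    rw [poch_succ', poch_succ']
    have e : (((k + 1 : ℕ) : ℝ) ^ 2 - 1 / 4) * (-(1 / 2) + k) = ((k : ℝ) ^ 2 - 1 / 4) * (3 / 2 + k) := by
      push_cast; ring
    calc _ = poch (-(1 / 2)) k * ((((k + 1 : ℕ) : ℝ) ^ 2 - 1 / 4) * (-(1 / 2) + k)) := by ring
      _ = (poch (-(1 / 2)) k * ((k : ℝ) ^ 2 - 1 / 4)) * (3 / 2 + k) := by rw [e]; ring
      _ = _ := by rw [ih]; ring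

lemma J_eq {δ s r : ℝ} (hδ : 0 < δ) (hs : 0 < s) (hsr : s < r) (hr : r < 1) :
    ∫ b in Set.Ioi (0 : ℝ), b ^ (δ - 1) * deriv^[3] (SigmaRS δ r s) b =
      4 * (δ - 2) * (Kcoef δ * ∑' k, tco (δ / 2) k * gk2 s k r) := by
  have h1 : 0 < 1 - s := by linarith
  have h2 : 0 < 1 - r := by linarith
  have h3 : 0 < r - s := by linarith
  have h4 : 0 < r := by linarith
  have hz : |zz s r| < 1 := by rw [abs_of_pos (zz_pos hs hsr hr)]; exact zz_lt hs hsr hr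
  have hEq : (s / (2 * r * (r - s))) / ((1 - s) / (2 * (r - s) * (1 - r))) = zz s r := by
    unfold zz; field_simp
  rw [sigma_eq hs hsr hr, sigma_integral (by positivity) hδ (by rw [hEq]; exact hz), hEq]
  have e1 : ∑' k, tco (δ / 2) k * gk2 s k r = √(s * (1 - s)) / √(r * (1 - r)) ^ 3 * (-(1 / 4)) *
      hyp2F1 (-(1/2)) (3 / 2) (δ / 2) (zz s r) := by
    unfold hyp2F1
    rw [← tsum_mul_left]
    refine tsum_congr (fun k => ?_)
    have h := poch_shift k
    unfold gk2 tco
    calc _ = √(s * (1 - s)) / √(r * (1 - r)) ^ 3 * (poch (-(1 / 2)) k *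
        (poch (-(1 / 2)) k * ((k : ℝ) ^ 2 - 1 / 4)) / (↑k.factorial * poch (δ / 2) k)) * zz s r ^ k := by ring
      _ = _ := by rw [h]; ring
  rw [e1, euler_transform (α := -(1/2)) (by linarith) hz, one_sub_zz hs hsr hr]
  have m := monomial_id (c := δ / 2) hs h1 h4 h2 h3
  rw [show δ / 2 - -(1 / 2) - 3 / 2 = δ / 2 - 1 by ring, show δ / 2 - -(1 / 2) = (δ + 1) / 2 by ring,
    show δ / 2 - 3 / 2 = (δ + 1) / 2 - 2 by ring]
  rw [show 2 - (δ + 1) / 2 = 3 / 2 - δ / 2 by ring]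
  generalize hyp2F1 ((δ + 1) / 2) ((δ + 1) / 2 - 2) (δ / 2) (zz s r) = H
  linear_combination (-(δ - 2) * Kcoef δ * H) * m

lemma interval_tsum {a b : ℝ} (hab : a ≤ b) {F : ℕ → ℝ → ℝ} (hF : ∀ k, ContinuousOn (F k) (Set.Icc a b))
    {B : ℕ → ℝ} (hB : ∀ k, ∫ x in a..b, ‖F (k + 1) x‖ ≤ B k) (hBs : Summable B) :
    IntervalIntegrable (fun x => ∑' k, F k x) volume a b ∧
    HasSum (fun k => ∫ x in a..b, F k x) (∫ x in a..b, ∑' k, F k x) := by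
  have hi : ∀ k, Integrable (F k) (volume.restrict (Set.Ioc a b)) := fun k =>
    ((hF k).integrableOn_Icc).mono_set Set.Ioc_subset_Icc_self
  have hs : Summable (fun k => ∫ x in Set.Ioc a b, ‖F k x‖) := by
    rw [← summable_nat_add_iff 1]
    refine Summable.of_nonneg_of_le (fun k => integral_nonneg (fun x => norm_nonneg _)) (fun k => ?_) hBs
    rw [← intervalIntegral.integral_of_le hab]
    exact hB k
  constructor
  · rw [intervalIntegrable_iff_integrableOn_Ioc_of_le hab]
    exact integrable_tsum_of hi hs
  · simp_rw [intervalIntegral.integral_of_le hab]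
    exact hasSum_integral_of_summable_integral_norm hi hs

lemma gk_cont {s u : ℝ} (hs : 0 < s) (hsu : s < u) (hu : u < 1) (k : ℕ) :
    ContinuousOn (gk0 s k) (Set.Icc s u) ∧ ContinuousOn (gk1 s k) (Set.Icc s u) ∧
      ContinuousOn (gk2 s k) (Set.Icc s u) := by
  have hz : ContinuousOn (zz s) (Set.Icc s u) := fun x hx =>
    (zz_deriv (by linarith) (by linarith [hx.1]) (by linarith [hx.2])).continuousAt.continuousWithinAt
  refine ⟨fun x hx => ?_, fun x hx => ?_, ?_⟩
  · exact (gk0_deriv (by linarith) (by linarith [hx.1]) (by linarith [hx.2]) k).continuousAt.continuousWithinAt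
  · exact (gk1_deriv (by linarith) (by linarith [hx.1]) (by linarith [hx.2]) k).continuousAt.continuousWithinAt
  · unfold gk2
    refine ContinuousOn.mul (ContinuousOn.mul continuousOn_const
      (ContinuousOn.div continuousOn_const (by fun_prop) ?_)) (hz.pow k)
    intro x hx
    have h1 : 0 < x := by linarith [hx.1]
    have h2 : 0 < 1 - x := by linarith [hx.2]
    positivity

lemma gk0_bound {s r : ℝ} (hs : 0 < s) (hsr : s ≤ r) (hr : r < 1) (k : ℕ) : ‖gk0 s k r‖ ≤ 1 := by
  have h1 : 0 < 1 - s := by linarith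
  have h2 : 0 < 1 - r := by linarith
  have h4 : 0 < r := by linarith
  have hz0 : 0 ≤ zz s r := by unfold zz; positivity
  have hz1 : zz s r ≤ 1 := by
    rcases hsr.eq_or_lt with e | e
    · rw [← e, zz_self hs (by linarith)]
    · exact (zz_lt hs e hr).le
  unfold gk0
  rw [Real.norm_of_nonneg (by positivity)]
  have a1 : √(s * (1 - s)) ≤ 1 := Real.sqrt_le_one.2 (by nlinarith)
  have a2 : √(r * (1 - r)) ≤ 1 := Real.sqrt_le_one.2 (by nlinarith)
  have a3 : zz s r ^ k ≤ 1 := pow_le_one₀ hz0 hz1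
  exact mul_le_one₀ (mul_le_one₀ a1 (by positivity) a2) (by positivity) a3

lemma gk2_nonneg {s r : ℝ} (hs : 0 < s) (hsr : s ≤ r) (hr : r < 1) (k : ℕ) : 0 ≤ gk2 s (k + 1) r := by
  have h1 : 0 < 1 - s := by linarith
  have h2 : 0 < 1 - r := by linarith
  have h4 : 0 < r := by linarith
  have hz0 : 0 ≤ zz s r := by unfold zz; positivity
  have : (0:ℝ) ≤ ((k + 1 : ℕ) : ℝ) ^ 2 - 1 / 4 := by
    push_cast
    have : (0 : ℝ) ≤ k := Nat.cast_nonneg k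
    nlinarith
  unfold gk2
  positivity

lemma gk2_int {s u : ℝ} (hs : 0 < s) (hsu : s < u) (hu : u < 1) (k : ℕ) :
    ∫ x in s..u, gk2 s (k + 1) x ≤ (k : ℝ) + 2 := by
  have hI : IntervalIntegrable (gk2 s (k + 1)) volume s u :=
    ContinuousOn.intervalIntegrable_of_Icc hsu.le (gk_cont hs hsu hu (k + 1)).2.2
  rw [intervalIntegral.integral_eq_sub_of_hasDerivAt (f := gk1 s (k + 1)) (fun x hx => ?_) hI,
    gk1_self hs (by linarith)]
  · have h1 : 0 < 1 - s := by linarith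
    have h2 : 0 < 1 - u := by linarith
    have h4 : 0 < u := by linarith
    have hz0 : 0 ≤ zz s u := by unfold zz; positivity
    have hk : (0 : ℝ) ≤ k := Nat.cast_nonneg k
    have : gk1 s (k + 1) u ≤ 0 := by
      unfold gk1
      refine mul_nonpos_of_nonpos_of_nonneg (mul_nonpos_of_nonneg_of_nonpos (by positivity)
        (div_nonpos_of_nonpos_of_nonneg ?_ (by positivity))) (by positivity)
      push_cast; linarith
    push_cast; linarith
  · rw [Set.uIcc_of_le hsu.le] at hx
    exact gk1_deriv (by linarith) (by linarith [hx.1]) (by linarith [hx.2]) _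

lemma half_core {c s u : ℝ} (hc : 0 < c) (hs : 0 < s) (hsu : s < u) (hu : u < 1) {h0 h1 h2 : ℝ → ℝ}
    (d0 : ∀ x, HasDerivAt h0 (h1 x) x) (d1 : ∀ x, HasDerivAt h1 (h2 x) x) (c2 : Continuous h2)
    (z0 : h0 u = 0) (z1 : h1 u = 0) :
    IntervalIntegrable (fun r => h2 r * ∑' k, tco c k * gk0 s k r) volume s u ∧
    IntervalIntegrable (fun r => h0 r * ∑' k, tco c k * gk2 s k r) volume s u ∧
    ∫ r in s..u, h2 r * ∑' k, tco c k * gk0 s k r = (-h1 s * (s * (1 - s)) + h0 s * (1 / 2 - s)) * (∑' k, tco c k)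
      - h0 s * (∑' k : ℕ, (k : ℝ) * tco c k) + ∫ r in s..u, h0 r * ∑' k, tco c k * gk2 s k r := by
  have c0 : Continuous h0 := continuous_iff_continuousAt.2 fun x => (d0 x).continuousAt
  have c1 : Continuous h1 := continuous_iff_continuousAt.2 fun x => (d1 x).continuousAt
  have T0 : Summable (tco c) := tco_summable hc
  have T1 := (tco_hasSum hc).summable
  obtain ⟨M0, hM0⟩ := (isCompact_Icc (a := s) (b := u)).exists_bound_of_continuousOn c0.continuousOn
  obtain ⟨M2, hM2⟩ := (isCompact_Icc (a := s) (b := u)).exists_bound_of_continuousOn c2.continuousOn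
  have M0n : 0 ≤ M0 := (norm_nonneg _).trans (hM0 s ⟨le_rfl, hsu.le⟩)
  have M2n : 0 ≤ M2 := (norm_nonneg _).trans (hM2 s ⟨le_rfl, hsu.le⟩)
  have cA : ∀ k, ContinuousOn (fun r => h2 r * (tco c k * gk0 s k r)) (Set.Icc s u) := fun k =>
    c2.continuousOn.mul (continuousOn_const.mul (gk_cont hs hsu hu k).1)
  have cB : ∀ k, ContinuousOn (fun r => h0 r * (tco c k * gk2 s k r)) (Set.Icc s u) := fun k =>
    c0.continuousOn.mul (continuousOn_const.mul (gk_cont hs hsu hu k).2.2)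
  have A := interval_tsum hsu.le cA (B := fun k => M2 * tco c (k + 1) * (u - s)) (fun k => by
      have : ∫ x in s..u, ‖h2 x * (tco c (k + 1) * gk0 s (k + 1) x)‖ ≤ ∫ x in s..u, M2 * tco c (k + 1) := by
        refine intervalIntegral.integral_mono_on hsu.le
          (ContinuousOn.intervalIntegrable_of_Icc hsu.le (cA (k + 1)).norm) intervalIntegrable_const ?_
        intro x hx
        rw [norm_mul, norm_mul, Real.norm_of_nonneg (tco_nonneg hc _)]
        have b1 := hM2 x hx
        have b2 := gk0_bound hs hx.1 (by linarith [hx.2]) (k + 1)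
        have b3 := tco_nonneg hc (k + 1)
        calc ‖h2 x‖ * (tco c (k + 1) * ‖gk0 s (k + 1) x‖) ≤ M2 * (tco c (k + 1) * 1) := by gcongr
          _ = _ := by ring
      refine this.trans (le_of_eq ?_)
      rw [intervalIntegral.integral_const]
      simp; ring) ((((summable_nat_add_iff 1).2 T0).mul_left M2).mul_right _)
  have Bd := interval_tsum hsu.le cB (B := fun k : ℕ => M0 * (((k + 1 : ℕ) : ℝ) * tco c (k + 1) + tco c (k + 1)))
    (fun k => by
      have b3 := tco_nonneg hc (k + 1)
      have : ∫ x in s..u, ‖h0 x * (tco c (k + 1) * gk2 s (k + 1) x)‖ ≤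
          ∫ x in s..u, (M0 * tco c (k + 1)) * gk2 s (k + 1) x := by
        refine intervalIntegral.integral_mono_on hsu.le
          (ContinuousOn.intervalIntegrable_of_Icc hsu.le (cB (k + 1)).norm)
          (ContinuousOn.intervalIntegrable_of_Icc hsu.le
            (continuousOn_const.mul (gk_cont hs hsu hu (k + 1)).2.2)) ?_
        intro x hx
        have b2 := gk2_nonneg hs hx.1 (by linarith [hx.2]) k
        rw [norm_mul, norm_mul, Real.norm_of_nonneg (tco_nonneg hc _), Real.norm_of_nonneg b2]
        have b1 := hM0 x hx
        calc ‖h0 x‖ * (tco c (k + 1) * gk2 s (k + 1) x) ≤ M0 * (tco c (k + 1) * gk2 s (k + 1) x) := by gcongr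
          _ = _ := by ring
      refine this.trans ?_
      rw [intervalIntegral.integral_const_mul]
      calc M0 * tco c (k + 1) * ∫ x in s..u, gk2 s (k + 1) x ≤ M0 * tco c (k + 1) * ((k : ℝ) + 2) := by
            gcongr
            exact gk2_int hs hsu hu k
        _ = _ := by push_cast; ring)
    ((((summable_nat_add_iff 1).2 T1).add ((summable_nat_add_iff 1).2 T0)).mul_left M0)
  have parts : ∀ k, ∫ r in s..u, h2 r * (tco c k * gk0 s k r) =
      (-h1 s * (s * (1 - s)) + h0 s * (1 / 2 - s)) * tco c k - h0 s * ((k : ℝ) * tco c k)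
        + ∫ r in s..u, h0 r * (tco c k * gk2 s k r) := by
    intro k
    have hx0 : ∀ x ∈ Set.uIcc s u, HasDerivAt (gk0 s k) (gk1 s k x) x := by
      intro x hx
      rw [Set.uIcc_of_le hsu.le] at hx
      exact gk0_deriv (by linarith) (by linarith [hx.1]) (by linarith [hx.2]) _
    have hx1 : ∀ x ∈ Set.uIcc s u, HasDerivAt (gk1 s k) (gk2 s k x) x := by
      intro x hx
      rw [Set.uIcc_of_le hsu.le] at hx
      exact gk1_deriv (by linarith) (by linarith [hx.1]) (by linarith [hx.2]) _
    have i1 := ContinuousOn.intervalIntegrable_of_Icc (μ := volume) hsu.le (gk_cont hs hsu hu k).2.1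
    have i2 := ContinuousOn.intervalIntegrable_of_Icc (μ := volume) hsu.le (gk_cont hs hsu hu k).2.2
    have p1 := intervalIntegral.integral_mul_deriv_eq_deriv_mul hx0 (fun x _ => d1 x) i1
      (c2.intervalIntegrable s u)
    have p2 := intervalIntegral.integral_mul_deriv_eq_deriv_mul hx1 (fun x _ => d0 x) i2
      (c1.intervalIntegrable s u)
    have e1 : ∫ r in s..u, h2 r * (tco c k * gk0 s k r) = tco c k * ∫ r in s..u, gk0 s k r * h2 r := by
      rw [← intervalIntegral.integral_const_mul]; congr 1; funext r; ring
    have e2 : ∫ r in s..u, h0 r * (tco c k * gk2 s k r) = tco c k * ∫ r in s..u, gk2 s k r * h0 r := by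
      rw [← intervalIntegral.integral_const_mul]; congr 1; funext r; ring
    rw [e1, e2, p1, p2, z0, z1, gk0_self hs (by linarith), gk1_self hs (by linarith)]
    ring
  refine ⟨?_, ?_, ?_⟩
  · simpa only [tsum_mul_left] using A.1
  · simpa only [tsum_mul_left] using Bd.1
  · have a2 := A.2
    have b2 := Bd.2
    simp only [tsum_mul_left] at a2 b2
    refine a2.unique ?_
    simp_rw [parts]
    exact ((T0.hasSum.mul_left _).sub (T1.hasSum.mul_left _)).add b2

noncomputable def JJ (δ s r : ℝ) : ℝ := ∫ b in Set.Ioi (0:ℝ), b ^ (δ - 1) * deriv^[3] (SigmaRS δ r s) b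

lemma right_half {δ s : ℝ} (hδ : 0 < δ) (hδ2 : δ ≠ 2) (hs : 0 < s) (hs1 : s < 1) {h : ℝ → ℝ}
    (hh : ContDiff ℝ 2 h) (hsupp : tsupport h ⊆ Set.Ioo 0 1) :
    IntervalIntegrable (fun r => deriv (deriv h) r * twoPt δ s r) volume s 1 ∧
    IntervalIntegrable (fun r => h r * JJ δ s r) volume s 1 ∧
    ∫ r in s..1, deriv (deriv h) r * twoPt δ s r =
      Kcoef δ * ((-deriv h s * (s * (1 - s)) + h s * (1 / 2 - s)) * (∑' k, tco (δ / 2) k)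
      - h s * (∑' k : ℕ, (k : ℝ) * tco (δ / 2) k))
      + (1 / (4 * (δ - 2))) * ∫ r in s..1, h r * JJ δ s r := by
  have hd2 : δ - 2 ≠ 0 := sub_ne_zero.2 hδ2
  have hsub1 : tsupport (deriv h) ⊆ tsupport h := tsupport_deriv_subset
  have hsub2 : tsupport (deriv (deriv h)) ⊆ tsupport h := tsupport_deriv_subset.trans hsub1
  have h1n : (1 : ℝ) ∈ (tsupport h)ᶜ := fun hc => absurd (hsupp hc).2 (lt_irrefl _)
  obtain ⟨ε, hε, hball⟩ := Metric.isOpen_iff.1 (isClosed_tsupport h).isOpen_compl 1 h1n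
  obtain ⟨u, hu1, hu2⟩ := exists_between (show max s (1 - ε) < 1 by simp [hs1, hε])
  have hsu : s < u := lt_of_le_of_lt (le_max_left _ _) hu1
  have hεu : 1 - ε < u := lt_of_le_of_lt (le_max_right _ _) hu1
  have hout : ∀ x, u ≤ x → x ≤ 1 → x ∉ tsupport h := by
    intro x h1 h2
    refine hball ?_
    rw [Metric.mem_ball, Real.dist_eq, abs_lt]
    constructor <;> linarith
  have hz : ∀ x, u ≤ x → x ≤ 1 → h x = 0 ∧ deriv h x = 0 ∧ deriv (deriv h) x = 0 := by
    intro x h1 h2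
    have := hout x h1 h2
    exact ⟨image_eq_zero_of_notMem_tsupport this,
      image_eq_zero_of_notMem_tsupport (fun hc => this (hsub1 hc)),
      image_eq_zero_of_notMem_tsupport (fun hc => this (hsub2 hc))⟩
  have hh1 : ContDiff ℝ 1 (deriv h) := (contDiff_succ_iff_deriv (n := 1)).1 hh |>.2.2
  have d0 : ∀ x, HasDerivAt h (deriv h x) x := fun x =>
    (hh.differentiable (by norm_num) x).hasDerivAt
  have d1 : ∀ x, HasDerivAt (deriv h) (deriv (deriv h) x) x := fun x =>
    (hh1.differentiable (by norm_num) x).hasDerivAt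
  have c2 : Continuous (deriv (deriv h)) := hh1.continuous_deriv le_rfl
  obtain ⟨iA, iB, eq⟩ := half_core (c := δ / 2) (by linarith) hs hsu hu2 d0 d1 c2
    (hz u le_rfl hu2.le).1 (hz u le_rfl hu2.le).2.1
  have eA : Set.EqOn (fun r => Kcoef δ * (deriv (deriv h) r * ∑' k, tco (δ / 2) k * gk0 s k r))
      (fun r => deriv (deriv h) r * twoPt δ s r) (Set.uIoc s u) := by
    intro r hr
    rw [Set.uIoc_of_le hsu.le] at hr
    simp only [twoPt_eq hδ hs hr.1 (lt_of_le_of_lt hr.2 hu2)]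
    ring
  have eB : Set.EqOn (fun r => (4 * (δ - 2) * Kcoef δ) * (h r * ∑' k, tco (δ / 2) k * gk2 s k r))
      (fun r => h r * JJ δ s r) (Set.uIoc s u) := by
    intro r hr
    rw [Set.uIoc_of_le hsu.le] at hr
    simp only [JJ, J_eq hδ hs hr.1 (lt_of_le_of_lt hr.2 hu2)]
    ring
  have zA : Set.EqOn (fun _ => (0:ℝ)) (fun r => deriv (deriv h) r * twoPt δ s r) (Set.uIoc u 1) := by
    intro r hr
    rw [Set.uIoc_of_le hu2.le] at hr
    simp [(hz r hr.1.le hr.2).2.2]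
  have zB : Set.EqOn (fun _ => (0:ℝ)) (fun r => h r * JJ δ s r) (Set.uIoc u 1) := by
    intro r hr
    rw [Set.uIoc_of_le hu2.le] at hr
    simp [(hz r hr.1.le hr.2).1]
  have jA := (iA.const_mul (Kcoef δ)).congr eA
  have jB := (iB.const_mul (4 * (δ - 2) * Kcoef δ)).congr eB
  have kA : IntervalIntegrable (fun r => deriv (deriv h) r * twoPt δ s r) volume u 1 :=
    (intervalIntegrable_const (c := (0:ℝ))).congr zA
  have kB : IntervalIntegrable (fun r => h r * JJ δ s r) volume u 1 :=
    (intervalIntegrable_const (c := (0:ℝ))).congr zB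
  refine ⟨jA.trans kA, jB.trans kB, ?_⟩
  rw [← intervalIntegral.integral_add_adjacent_intervals jA kA,
    ← intervalIntegral.integral_add_adjacent_intervals jB kB,
    ← intervalIntegral.integral_congr_ae (ae_of_all _ eA), ← intervalIntegral.integral_congr_ae (ae_of_all _ eB),
    ← intervalIntegral.integral_congr_ae (ae_of_all _ zA), ← intervalIntegral.integral_congr_ae (ae_of_all _ zB),
    intervalIntegral.integral_const_mul, intervalIntegral.integral_const_mul, eq]
  simp only [intervalIntegral.integral_zero, add_zero]
  field_simp

lemma twoPt_refl {δ s r : ℝ} (hrs : r < s) : twoPt δ s r = twoPt δ (1 - s) (1 - r) := by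
  unfold twoPt
  rw [if_neg (by linarith), if_pos (by linarith), show 1 - r - (1 - s) = s - r by ring,
    show (1 - s) * (1 - (1 - r)) = r * (1 - s) by ring, show (1 - r) * (1 - (1 - s)) = s * (1 - r) by ring]

lemma sigma_refl {δ s r : ℝ} (hrs : r < s) : SigmaRS δ r s = SigmaRS δ (1 - r) (1 - s) := by
  have hD : Dcoef s r = Dcoef (1 - s) (1 - r) := by
    unfold Dcoef
    rw [if_neg (by linarith), if_pos (by linarith)]
    congr 1 <;> ring
  have hf : ∀ k, fcoef s r k = fcoef (1 - s) (1 - r) k := by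
    intro k
    unfold fcoef
    rw [if_neg (by linarith), if_pos (by linarith), show 1 - r - (1 - s) = s - r by ring]
  funext b
  unfold SigmaRS
  simp only [hD, hf]
  rw [show (1 - r) * (1 - (1 - r)) = r * (1 - r) by ring]

lemma JJ_refl {δ s r : ℝ} (hrs : r < s) : JJ δ s r = JJ δ (1 - s) (1 - r) := by
  unfold JJ
  rw [sigma_refl hrs]

lemma reflect_int {s : ℝ} (hs : 0 < s) {f F : ℝ → ℝ} (hF : IntervalIntegrable F volume (1 - s) 1)
    (hf : ∀ r, r < s → f r = F (1 - r)) :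
    IntervalIntegrable f volume 0 s ∧ ∫ r in 0..s, f r = ∫ r in (1 - s)..1, F r := by
  have h1 : IntervalIntegrable (fun x => F (1 - x)) volume 0 s := by
    have := (hF.comp_sub_left 1).symm
    simpa using this
  have hne : ∀ᵐ x : ℝ ∂volume, x ≠ s := by
    rw [ae_iff]; simp
  have hae : ∀ᵐ x : ℝ ∂volume, x ∈ Set.uIoc 0 s → F (1 - x) = f x := by
    filter_upwards [hne] with x hx hx2
    rw [Set.uIoc_of_le hs.le] at hx2
    exact (hf x (lt_of_le_of_ne hx2.2 hx)).symm
  constructor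
  · refine h1.congr_ae ?_
    exact (ae_restrict_iff' measurableSet_uIoc).2 hae
  · rw [← intervalIntegral.integral_congr_ae hae, intervalIntegral.integral_comp_sub_left]
    simp

theorem twoPt_distributional_second_derivative (δ : ℝ) (hδ : 0 < δ) (hδ2 : δ ≠ 2) (s : ℝ) (hs : s ∈ Set.Ioo (0 : ℝ) 1)
    (h : ℝ → ℝ) (hh : ContDiff ℝ 2 h) (hsupp : tsupport h ⊆ Set.Ioo 0 1) :
    ∫ r in (0:ℝ)..1, deriv (deriv h) r * twoPt δ s r
      = -h s + (1 / (4 * (δ - 2))) * ∫ r in (0:ℝ)..1, h r * ∫ b in Set.Ioi (0:ℝ), b ^ (δ - 1) * deriv^[3] (SigmaRS δ r s) b := by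
  obtain ⟨hs0, hs1⟩ := hs
  obtain ⟨a1, a2, a3⟩ := right_half hδ hδ2 hs0 hs1 hh hsupp
  have hg : ContDiff ℝ 2 (fun x => h (1 - x)) := hh.comp (contDiff_const.sub contDiff_id)
  have hgs : tsupport (fun x => h (1 - x)) ⊆ Set.Ioo 0 1 := by
    have : tsupport (fun x => h (1 - x)) ⊆ (fun x : ℝ => 1 - x) ⁻¹' tsupport h :=
      closure_minimal (fun x hx => subset_tsupport h hx)
        ((isClosed_tsupport h).preimage (by fun_prop))
    intro x hx
    have := hsupp (this hx)
    constructor <;> linarith [this.1, this.2]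
  have g1 : deriv (fun x => h (1 - x)) = fun x => -deriv h (1 - x) := by
    funext x; exact deriv_comp_const_sub ..
  have g2 : deriv (deriv (fun x => h (1 - x))) = fun x => deriv (deriv h) (1 - x) := by
    rw [g1]; funext x
    rw [deriv.fun_neg, deriv_comp_const_sub, neg_neg]
  obtain ⟨b1, b2, b3⟩ := right_half hδ hδ2 (show 0 < 1 - s by linarith) (by linarith) hg hgs
  rw [g2] at b1 b3
  rw [g1] at b3
  obtain ⟨l1, l2⟩ := reflect_int hs0 (f := fun r => deriv (deriv h) r * twoPt δ s r) b1 (fun r hr => by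
    simp only [twoPt_refl hr, sub_sub_cancel])
  obtain ⟨m1, m2⟩ := reflect_int hs0 (f := fun r => h r * JJ δ s r) b2 (fun r hr => by
    simp only [JJ_refl hr, sub_sub_cancel])
  change _ = -h s + (1 / (4 * (δ - 2))) * ∫ r in (0:ℝ)..1, h r * JJ δ s r
  rw [← intervalIntegral.integral_add_adjacent_intervals l1 a1,
    ← intervalIntegral.integral_add_adjacent_intervals m1 a2, l2, m2, a3, b3]
  simp only [sub_sub_cancel]
  have hT := (tco_hasSum (c := δ / 2) (by linarith)).tsum_eq
  have hK : Kcoef δ * (2 * ∑' k : ℕ, (k : ℝ) * tco (δ / 2) k) = 1 := by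
    rw [hT, show δ / 2 + 1 / 2 = (δ + 1) / 2 by ring]
    unfold Kcoef
    have p1 := Real.Gamma_pos_of_pos (show 0 < δ / 2 by linarith)
    have p2 := Real.Gamma_pos_of_pos (show 0 < (δ + 1) / 2 by linarith)
    field_simp
    norm_num
  linear_combination (-h s) * hK
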